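/- arXiv:1410.5115 — 15 statements merged into one kernel-verified Lean document; each statement's English description precedes it below -/
import Mathlib

section
/- Let n ≥ 1. Suppose that to every affinely independent tuple Δ = (V_0, …, V_n) of n+1 points of ℝⁿ a point C(Δ) ∈ ℝⁿ is assigned such that: (1) for every similarity f of ℝⁿ (a map for which there exists r > 0 with dist(f(x), f(y)) = r·dist(x, y) for all x, y; both orientation-preserving and orientation-reversing similarities are allowed), one has C(f(V_0), …, f(V_n)) = f(C(V_0, …, V_n)); (2) C is invariant under permutations of the vertices V_0, …, V_n; (3) there exist polynomials P_1, …, P_n in the n(n+1) coordinates of the vertices such that for every affinely independent tuple Δ, the ℓ-th coordinate of Vol(Δ)·C(Δ) equals P_ℓ evaluated at the coordinates of the vertices, where Vol(Δ) is the signed volume (1/n!)·det(V_1 − V_0, …, V_n − V_0). Then there exists a constant t ∈ ℝ, depending only on C and not on Δ, such that for every affinely independent tuple Δ one has C(Δ) = t·CM(Δ) + (1 − t)·CC(Δ), where CM(Δ) is the centroid of the vertices and CC(Δ) is the circumcenter of the simplex Δ. -/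
/-- The signed volume of the simplex with vertices `W 0, …, W n` in `ℝⁿ`:
`(1/n!) · det(W 1 − W 0, …, W n − W 0)`. -/
noncomputable def signedVol (n : ℕ) (W : Fin (n+1) → EuclideanSpace ℝ (Fin n)) : ℝ :=
  (Matrix.of fun r c : Fin n => (W c.succ - W 0) r).det / n.factorial

open Matrix in
lemma cm_dense {n : ℕ} (a : Matrix (Fin n) (Fin n) ℝ → ℝ) (ha : Continuous a)
    (h : ∀ A, A.det ≠ 0 → a A = 0) (A : Matrix (Fin n) (Fin n) ℝ) : a A = 0 := by
  have hfin : {s : ℝ | ((-A).charpoly).IsRoot s}.Finite :=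
    Polynomial.finite_setOfPred_isRoot (-A).charpoly_monic.ne_zero
  have hd : Dense {s : ℝ | ((-A).charpoly).IsRoot s}ᶜ := Set.Countable.dense_compl ℝ hfin.countable
  have hc : Continuous (fun s : ℝ => a (Matrix.scalar (Fin n) s - (-A))) := by
    apply ha.comp
    refine Continuous.sub ?_ continuous_const
    refine continuous_matrix fun i j => ?_
    simp only [Matrix.scalar_apply, Matrix.diagonal_apply]
    split_ifs <;> fun_prop
  have := Continuous.ext_on hd hc (continuous_const (y := (0:ℝ))) (by
    intro s hs
    apply h
    rw [← Matrix.eval_charpoly]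
    exact hs)
  have := congrFun this 0
  simpa using this

open Matrix in
lemma cm_open {n : ℕ} (p : MvPolynomial (Fin n × Fin n) ℝ) (U : Set (Fin n × Fin n → ℝ))
   (hU : IsOpen U) (x : Fin n × Fin n → ℝ) (hx : x ∈ U)
   (h : ∀ y ∈ U, MvPolynomial.eval y p = 0) : p = 0 := by
  obtain ⟨ε, hε, hb⟩ := Metric.isOpen_iff.1 hU x hx
  refine MvPolynomial.funext_set (fun i => Metric.ball (x i) ε) (fun i => ?_) fun y hy => ?_
  · rw [Real.ball_eq_Ioo]; exact Set.Ioo_infinite (by linarith)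
  · rw [map_zero]
    apply h _ (hb _)
    rw [ball_pi _ hε]
    exact hy

open Matrix in
lemma cm_roots {n : ℕ} (A : Matrix (Fin n) (Fin n) ℝ)
    (hA : ∀ k : Fin n, A.charpoly.eval ((k:ℝ) - 1/2) * A.charpoly.eval ((k:ℝ) + 1/2) < 0) :
    ∃ s : Fin n → ℝ, Function.Injective s ∧ ∀ k, A.charpoly.eval (s k) = 0 := by
  have : ∀ k : Fin n, ∃ s : ℝ, s ∈ Set.Ioo ((k:ℝ) - 1/2) ((k:ℝ)+1/2) ∧ A.charpoly.eval s = 0 := by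
    intro k
    have hc : ContinuousOn (fun s => A.charpoly.eval s) (Set.Icc ((k:ℝ) - 1/2) ((k:ℝ)+1/2)) :=
      A.charpoly.continuous.continuousOn
    have hle : ((k:ℝ) - 1/2) ≤ ((k:ℝ)+1/2) := by linarith
    rcases mul_neg_iff.1 (hA k) with h | h
    · exact intermediate_value_Ioo' hle hc ⟨h.2, h.1⟩
    · exact intermediate_value_Ioo hle hc h
  choose s hs hs0 using this
  refine ⟨s, fun i j hij => ?_, hs0⟩
  have h1 := hs i
  have h2 := hs j
  rw [hij] at h1
  simp only [Set.mem_Ioo] at h1 h2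
  have a1 : (i:ℝ) < j + 1 := by linarith
  have a2 : (j:ℝ) < i + 1 := by linarith
  norm_cast at a1 a2
  omega

open Matrix in
lemma cm_div {n : ℕ} (f : MvPolynomial (Fin n × Fin n) ℝ)
    (h : ∀ A : Matrix (Fin n) (Fin n) ℝ, A.det = 0 → MvPolynomial.eval (fun p => A p.1 p.2) f = 0) :
    ∃ g, f = (mvPolynomialX (Fin n) (Fin n) ℝ).det * g := by
  classical
  set X := mvPolynomialX (Fin n) (Fin n) ℝ with hX
  let Φ : MvPolynomial (Fin n × Fin n) ℝ →ₐ[ℝ] Polynomial (MvPolynomial (Fin n × Fin n) ℝ) :=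
    MvPolynomial.aeval fun p => Polynomial.C (X p.1 p.2) - if p.1 = p.2 then Polynomial.X else 0
  have hmon := X.charpoly_monic
  have evalF : ∀ (f : MvPolynomial (Fin n × Fin n) ℝ) (A : Matrix (Fin n) (Fin n) ℝ) (s : ℝ),
        ((Φ f).map (MvPolynomial.eval fun p => A p.1 p.2)).eval s
          = MvPolynomial.eval (fun p => (A - Matrix.scalar (Fin n) s) p.1 p.2) f := by
      intro f A s
      induction f using MvPolynomial.induction_on with
      | C a => simp [Φ]
      | add p q hp hq => simp_all
      | mul_X p i hp => 
        rw [map_mul, Polynomial.map_mul, Polynomial.eval_mul, hp, map_mul]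
        congr 1
        simp only [Φ, MvPolynomial.aeval_X, hX, Matrix.mvPolynomialX_apply, Matrix.sub_apply, MvPolynomial.eval_X, Matrix.scalar_apply, Matrix.diagonal_apply, Polynomial.map_sub, Polynomial.map_C, Polynomial.eval_sub, Polynomial.eval_C]
        split_ifs <;> simp
  have e3 : ∀ f, (Φ f).eval 0 = f := by
    intro f
    induction f using MvPolynomial.induction_on with
      | C a => simp [Φ]
      | add p q hp hq => simp_all
      | mul_X p i hp => 
        rw [map_mul, Polynomial.eval_mul, hp]
        congr 1
        simp only [Φ, MvPolynomial.aeval_X, hX, Matrix.mvPolynomialX_apply, Polynomial.eval_sub, Polynomial.eval_C]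
        split_ifs <;> simp
  have key : (Φ f) %ₘ X.charpoly = 0 := by
    ext1 m
    rw [Polynomial.coeff_zero]
    have hch : ∀ y : Fin n × Fin n → ℝ, X.charpoly.map (MvPolynomial.eval y) = (Matrix.of fun i j => y (i,j)).charpoly := by
      intro y
      rw [← Matrix.charpoly_map]
      congr 1
      ext i j
      simp [hX]
    refine cm_open _ {y | ∀ k : Fin n, (X.charpoly.map (MvPolynomial.eval y)).eval ((k:ℝ) - 1/2) * (X.charpoly.map (MvPolynomial.eval y)).eval ((k:ℝ) + 1/2) < 0} ?_
      (fun p => if p.1 = p.2 then (p.1 : ℝ) else 0) ?_ ?_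
    · have hcont : ∀ s : ℝ, Continuous fun y : Fin n × Fin n → ℝ => (X.charpoly.map (MvPolynomial.eval y)).eval s := by
        intro s
        simp only [hch, Matrix.eval_charpoly]
        refine Continuous.matrix_det ?_
        refine Continuous.sub continuous_const ?_
        exact continuous_matrix fun i j => by simp only [Matrix.of_apply]; fun_prop
      have : {y : Fin n × Fin n → ℝ | ∀ k : Fin n, (X.charpoly.map (MvPolynomial.eval y)).eval ((k:ℝ) - 1/2) * (X.charpoly.map (MvPolynomial.eval y)).eval ((k:ℝ) + 1/2) < 0} = ⋂ k : Fin n, {y | (X.charpoly.map (MvPolynomial.eval y)).eval ((k:ℝ) - 1/2) * (X.charpoly.map (MvPolynomial.eval y)).eval ((k:ℝ) + 1/2) < 0} := by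
        ext; simp
      rw [this]
      exact isOpen_iInter_of_finite fun k => isOpen_lt ((hcont _).mul (hcont _)) continuous_const
    · intro k
      rw [hch]
      have : (Matrix.of fun i j : Fin n => if i = j then (i:ℝ) else 0) = Matrix.diagonal fun i : Fin n => (i:ℝ) := by
        ext i j; simp [Matrix.diagonal_apply]
      simp only [this, Matrix.charpoly_diagonal, Polynomial.eval_prod, ← Finset.prod_mul_distrib]
      rw [← Finset.mul_prod_erase _ _ (Finset.mem_univ k)]
      apply mul_neg_of_neg_of_pos
      · simp
      · apply Finset.prod_pos
        intro i hi
        have hik := Finset.ne_of_mem_erase hi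
        have : (1:ℝ) ≤ ((k:ℝ) - i)^2 := by
          have h1 : (1:ℤ) ≤ ((k:ℤ) - i)^2 := by
            have : ((k:ℤ) - i) ≠ 0 := by
              intro h; apply hik; ext; omega
            have := sq_pos_of_ne_zero this
            omega
          exact_mod_cast h1
        simp
        nlinarith
    · intro y hy
      have hy' : ∀ k : Fin n, _ := hy
      rw [hch] at hy'
      obtain ⟨s, hsi, hs⟩ := cm_roots _ hy'
      have hz : ((Φ f) %ₘ X.charpoly).map (MvPolynomial.eval y) = 0 := by
        rw [Polynomial.map_modByMonic _ hmon, hch]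
        rcases Nat.eq_zero_or_pos n with h0 | hnpos
        · subst h0
          simp [Matrix.charpoly]
        apply Polynomial.eq_zero_of_natDegree_lt_card_of_eval_eq_zero _ hsi
        · intro k
          have := evalF f (Matrix.of fun i j => y (i,j)) (s k)
          simp only [Matrix.of_apply, Prod.mk.eta] at this
          rw [Polynomial.modByMonic_eq_sub_mul_div, Polynomial.eval_sub, Polynomial.eval_mul, hs, this, zero_mul, sub_zero]
          apply h
          have h2 := hs k
          rw [Matrix.eval_charpoly] at h2
          rw [← neg_sub, Matrix.det_neg, h2, mul_zero]
        · have := Polynomial.natDegree_modByMonic_lt (Polynomial.map (MvPolynomial.eval y) (Φ f)) (Matrix.charpoly_monic (Matrix.of fun i j => y (i,j))) (by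
            intro h1
            have := Matrix.charpoly_natDegree_eq_dim (Matrix.of fun i j => y (i,j))
            rw [h1] at this
            simp at this; omega)
          rwa [Matrix.charpoly_natDegree_eq_dim] at this
      have := congrArg (fun q => Polynomial.coeff q m) hz
      simpa using this
  refine ⟨(-1) ^ n * ((Φ f) /ₘ X.charpoly).eval 0, ?_⟩
  have e := Polynomial.modByMonic_add_div (Φ f) X.charpoly
  rw [key, zero_add] at e
  have e2 := congrArg (Polynomial.eval 0) e
  rw [Polynomial.eval_mul, e3] at e2
  rw [X.det_eq_sign_charpoly_coeff, Polynomial.coeff_zero_eq_eval_zero]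
  conv_lhs => rw [← e2]
  have : ((-1:MvPolynomial (Fin n × Fin n) ℝ)^n * (-1)^n) = 1 := by
    rw [← mul_pow]; simp
  simp only [Fintype.card_fin]
  linear_combination (-(Polynomial.eval 0 X.charpoly * (Φ f /ₘ X.charpoly).eval 0)) * this

lemma cm_quad_of_hom {ι : Type*} [Fintype ι] [DecidableEq ι] (g : MvPolynomial ι ℝ)
    (hg : g.IsHomogeneous 2) :
    ∃ c : ι → ι → ℝ, ∀ x, MvPolynomial.eval x g = ∑ p, ∑ q, c p q * (x p * x q) := by
  have main : ∀ d ∈ g.support, ∃ c : ι → ι → ℝ, ∀ x : ι → ℝ,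
      g.coeff d * ∏ i, x i ^ d i = ∑ p, ∑ q, c p q * (x p * x q) := by
    intro d hd
    have hdeg := hg (MvPolynomial.mem_support_iff.1 hd)
    have h2 : d.toMultiset.card = 2 := by
      rw [Finsupp.card_toMultiset]
      rw [← hdeg, Finsupp.weight_apply]
      simp [Finsupp.sum]
    obtain ⟨p, q, hpq⟩ := Multiset.card_eq_two.1 h2
    refine ⟨fun a b => if a = p ∧ b = q then g.coeff d else 0, fun x => ?_⟩
    have hprod : ∏ i, x i ^ d i = x p * x q := by
      have := Finsupp.toMultiset_map d x
      have h3 : (d.toMultiset.map x).prod = ∏ i, x i ^ d i := by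
        rw [Finset.prod_multiset_map_count]
        rw [← Finset.prod_subset (Finset.subset_univ d.toMultiset.toFinset)]
        · simp
        · intro i _ hi
          simp at hi
          simp [hi]
      rw [← h3, hpq]; simp
    rw [hprod, Finset.sum_eq_single p, Finset.sum_eq_single q]
    · simp
    · intro b _ hb; simp [hb]
    · simp
    · intro b _ hb; simp [hb]
    · simp
  choose! c hc using main
  refine ⟨fun p q => ∑ d ∈ g.support, c d p q, fun x => ?_⟩
  rw [MvPolynomial.eval_eq', Finset.sum_congr rfl (fun d hd => hc d hd x)]
  rw [Finset.sum_comm]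
  refine Finset.sum_congr rfl fun p _ => ?_
  rw [Finset.sum_comm]
  refine Finset.sum_congr rfl fun q _ => ?_
  rw [Finset.sum_mul]

lemma cm_evalP {ι : Type*} (g : MvPolynomial ι ℝ) (x : ι → ℝ) (s : ℝ) :
    (MvPolynomial.aeval (fun i => Polynomial.C (x i) * Polynomial.X) g : Polynomial ℝ).eval s
      = MvPolynomial.eval (fun i => s * x i) g := by
  induction g using MvPolynomial.induction_on with
  | C a => simp
  | add p q hp hq => simp_all
  | mul_X p i hp =>
    rw [map_mul, Polynomial.eval_mul, hp, map_mul, MvPolynomial.aeval_X, MvPolynomial.eval_X,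
      Polynomial.eval_mul, Polynomial.eval_C, Polynomial.eval_X, mul_comm (x i)]

lemma cm_quad {ι : Type*} [Fintype ι] [DecidableEq ι] (g : MvPolynomial ι ℝ)
    (h : ∀ s : ℝ, 0 < s → ∀ x, MvPolynomial.eval (fun i => s * x i) g = s ^ 2 * MvPolynomial.eval x g) :
    ∃ c : ι → ι → ℝ, (∀ p q, c p q = c q p) ∧
      ∀ x, MvPolynomial.eval x g = ∑ p, ∑ q, c p q * (x p * x q) := by
  have h2 : ∀ x, MvPolynomial.eval x g = MvPolynomial.eval x (MvPolynomial.homogeneousComponent 2 g) := by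
    intro x
    let P : Polynomial ℝ := MvPolynomial.aeval (fun i => Polynomial.C (x i) * Polynomial.X) g
    have hP : P = Polynomial.C (MvPolynomial.eval x g) * Polynomial.X ^ 2 := by
      apply Polynomial.eq_of_infinite_eval_eq
      apply (Set.Ioi_infinite (0:ℝ)).mono
      intro s hs
      have : P.eval s = MvPolynomial.eval (fun i => s * x i) g := cm_evalP g x s
      show P.eval s = _
      rw [this, h s hs, Polynomial.eval_mul, Polynomial.eval_C, Polynomial.eval_pow, Polynomial.eval_X]
      ring
    have hP2 : P = ∑ k ∈ Finset.range (g.totalDegree + 1), Polynomial.C (MvPolynomial.eval x (MvPolynomial.homogeneousComponent k g)) * Polynomial.X ^ k := by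
      apply Polynomial.funext
      intro s
      have : P.eval s = MvPolynomial.eval (fun i => s * x i) g := cm_evalP g x s
      rw [this]
      conv_lhs => rw [← MvPolynomial.sum_homogeneousComponent g]
      rw [map_sum, Polynomial.eval_finsetSum]
      refine Finset.sum_congr rfl fun k _ => ?_
      have hh := MvPolynomial.homogeneousComponent_isHomogeneous k g
      rw [MvPolynomial.eval_eq', MvPolynomial.eval_eq']
      simp only [Polynomial.eval_mul, Polynomial.eval_C, Polynomial.eval_pow, Polynomial.eval_X, Finset.sum_mul]
      refine Finset.sum_congr rfl fun d hd => ?_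
      have hdeg := hh (MvPolynomial.mem_support_iff.1 hd)
      have hk : ∑ i, d i = k := by
        rw [← hdeg, Finsupp.weight_apply, Finsupp.sum_fintype] <;> simp
      simp only [mul_pow, Finset.prod_mul_distrib, Finset.prod_pow_eq_pow_sum, hk]
      ring
    have := congrArg (fun q => Polynomial.coeff q 2) (hP.symm.trans hP2)
    simp only [Polynomial.coeff_C_mul, Polynomial.finsetSum_coeff, Polynomial.coeff_X_pow] at this
    simp at this
    by_cases hd : 2 < g.totalDegree + 1
    · rw [this, if_pos (by omega)]
    · rw [this, MvPolynomial.homogeneousComponent_eq_zero _ _ (by omega), if_neg (by omega), map_zero]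
  obtain ⟨c, hc⟩ := cm_quad_of_hom _ (MvPolynomial.homogeneousComponent_isHomogeneous 2 g)
  refine ⟨fun p q => (c p q + c q p) / 2, fun p q => by ring, fun x => ?_⟩
  rw [h2, hc]
  have : ∑ p, ∑ q, c p q * (x p * x q) = ∑ p, ∑ q, c q p * (x p * x q) := by
    rw [Finset.sum_comm]
    simp only [mul_comm (x _) (x _)]
  have e : ∀ p q, (c p q + c q p) / 2 * (x p * x q) = (c p q * (x p * x q)) / 2 + (c q p * (x p * x q)) / 2 := by
    intros; ring
  simp only [e, Finset.sum_add_distrib, ← Finset.sum_div]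
  rw [← this]; ring

lemma cm_uniq {ι : Type*} [Fintype ι] [DecidableEq ι] (c d : ι → ι → ℝ)
    (hc : ∀ p q, c p q = c q p) (hd : ∀ p q, d p q = d q p)
    (h : ∀ x : ι → ℝ, ∑ p, ∑ q, c p q * (x p * x q) = ∑ p, ∑ q, d p q * (x p * x q)) (p q : ι) :
    c p q = d p q := by
  have h1 : ∀ (c : ι → ι → ℝ) (u v : ι), ∑ p, ∑ q, c p q * ((Pi.single u 1 : ι → ℝ) p * (Pi.single v 1 : ι → ℝ) q) = c u v := by
    intro c u v
    rw [Finset.sum_eq_single u, Finset.sum_eq_single v]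
    · simp
    · intro b _ hb; simp [hb]
    · simp
    · intro b _ hb; simp [hb]
    · simp
  have ha := h (Pi.single p 1 + Pi.single q 1)
  have hb := h (Pi.single p 1)
  have hb' := h (Pi.single q 1)
  rw [h1, h1] at hb hb'
  simp only [Pi.add_apply, add_mul, mul_add, Finset.sum_add_distrib, h1] at ha
  rw [hc q p, hd q p] at ha
  linarith

lemma cm_inv {n : ℕ} (r0 : Fin n) (c : Fin n × Fin n → Fin n × Fin n → ℝ) (hc : ∀ p q, c p q = c q p)
    (H1 : ∀ (r : Fin n) (x : Fin n × Fin n → ℝ),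
      ∑ p, ∑ q, c p q * (((if p.1 = r then -1 else 1) * x p) * ((if q.1 = r then -1 else 1) * x q))
        = ∑ p, ∑ q, c p q * (x p * x q))
    (H2 : ∀ (σ : Equiv.Perm (Fin n)) (x : Fin n × Fin n → ℝ),
      ∑ p, ∑ q, c p q * (x (σ p.1, p.2) * x (σ q.1, q.2)) = ∑ p, ∑ q, c p q * (x p * x q))
    (x : Fin n × Fin n → ℝ) :
    ∑ p, ∑ q, c p q * (x p * x q) = ∑ j, ∑ k, c (r0, j) (r0, k) * ∑ r, x (r, j) * x (r, k) := by
  have k1 : ∀ r s j k, r ≠ s → c (r,j) (s,k) = 0 := by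
    intro r s j k hrs
    have := cm_uniq (fun p q => c p q * ((if p.1 = r then -1 else 1) * (if q.1 = r then -1 else 1))) c
      (fun p q => by rw [hc p q]; ring) hc (fun x => by
        rw [← H1 r x]
        refine Finset.sum_congr rfl fun p _ => Finset.sum_congr rfl fun q _ => ?_
        ring) (r,j) (s,k)
    simp [hrs.symm] at this
    linarith
  have k2 : ∀ r j k, c (r,j) (r,k) = c (r0,j) (r0,k) := by
    intro r j k
    let e : Equiv.Perm (Fin n × Fin n) := (Equiv.swap r r0).prodCongr (Equiv.refl _)
    have := cm_uniq (fun p q => c (e.symm p) (e.symm q)) c (fun p q => hc _ _) hc (fun x => by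
        rw [← H2 (Equiv.swap r r0) x, ← Equiv.sum_comp e]
        refine Finset.sum_congr rfl fun p _ => ?_
        rw [← Equiv.sum_comp e]
        refine Finset.sum_congr rfl fun q _ => ?_
        simp only [Equiv.symm_apply_apply]
        rfl) (r,j) (r,k)
    simpa [e] using this.symm
  simp only [Fintype.sum_prod_type]
  have : ∀ r j, ∑ s, ∑ k, c (r,j) (s,k) * (x (r,j) * x (s,k)) = ∑ k, c (r0,j) (r0,k) * (x (r,j) * x (r,k)) := by
    intro r j
    rw [Finset.sum_eq_single r]
    · simp only [k2]
    · intro s _ hs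
      simp [k1 r s j _ hs.symm]
    · simp
  simp only [this, Finset.mul_sum]
  rw [Finset.sum_comm]
  refine Finset.sum_congr rfl fun j _ => ?_
  rw [Finset.sum_comm]

noncomputable def cmCol {n : ℕ} (A : Matrix (Fin n) (Fin n) ℝ) (c : Fin n) : EuclideanSpace ℝ (Fin n) :=
  WithLp.toLp 2 (fun r => A r c)

noncomputable def cmSx {n : ℕ} (A : Matrix (Fin n) (Fin n) ℝ) : Fin (n+1) → EuclideanSpace ℝ (Fin n) :=
  Fin.cons 0 (cmCol A)

lemma cm_aff {n : ℕ} (Δ : Fin (n+1) → EuclideanSpace ℝ (Fin n)) :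
    AffineIndependent ℝ Δ ↔ (Matrix.of fun r c : Fin n => (Δ c.succ - Δ 0) r).det ≠ 0 := by
  rw [affineIndependent_iff_linearIndependent_vsub ℝ Δ 0,
    ← linearIndependent_equiv (finSuccAboveEquiv (0 : Fin (n+1))),
    ← isUnit_iff_ne_zero, ← Matrix.isUnit_iff_isUnit_det, ← Matrix.linearIndependent_cols_iff_isUnit,
    ← LinearMap.linearIndependent_iff (WithLp.linearEquiv 2 ℝ (Fin n → ℝ)).toLinearMap (LinearEquiv.ker _)]
  rfl

lemma cm_sx_mat {n : ℕ} (A : Matrix (Fin n) (Fin n) ℝ) :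
    (Matrix.of fun r c : Fin n => (cmSx A c.succ - cmSx A 0) r) = A := by
  ext r c
  simp [cmSx, cmCol]

lemma cm_sx_aff {n : ℕ} (A : Matrix (Fin n) (Fin n) ℝ) (h : A.det ≠ 0) : AffineIndependent ℝ (cmSx A) := by
  rw [cm_aff, cm_sx_mat]; exact h

open Matrix in
lemma cm_isom {n : ℕ} (M : Matrix (Fin n) (Fin n) ℝ) (hM : Mᵀ * M = 1) (x y : EuclideanSpace ℝ (Fin n)) :
    dist (WithLp.toLp 2 (M *ᵥ x.ofLp) : EuclideanSpace ℝ (Fin n)) (WithLp.toLp 2 (M *ᵥ y.ofLp)) = dist x y := by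
  rw [dist_eq_norm, dist_eq_norm, ← sq_eq_sq₀ (norm_nonneg _) (norm_nonneg _), ← WithLp.toLp_sub, ← Matrix.mulVec_sub]
  have e : ∀ z : EuclideanSpace ℝ (Fin n), ‖z‖^2 = z.ofLp ⬝ᵥ z.ofLp := by
    intro z
    rw [EuclideanSpace.real_norm_sq_eq]
    simp [dotProduct, sq]
  rw [e, e]
  simp only [WithLp.ofLp_sub]
  rw [Matrix.dotProduct_mulVec, Matrix.vecMul_mulVec, hM, Matrix.vecMul_one]

open Matrix in
lemma cm_equivar {n : ℕ} 
    (Ctr : (Fin (n+1) → EuclideanSpace ℝ (Fin n)) → EuclideanSpace ℝ (Fin n))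
    (h1 : ∀ f : EuclideanSpace ℝ (Fin n) → EuclideanSpace ℝ (Fin n),
      (∃ r : ℝ, 0 < r ∧ ∀ x y, dist (f x) (f y) = r * dist x y) →
      ∀ Δ : Fin (n+1) → EuclideanSpace ℝ (Fin n), AffineIndependent ℝ Δ →
        Ctr (f ∘ Δ) = f (Ctr Δ))
    (M : Matrix (Fin n) (Fin n) ℝ) (hM : Mᵀ * M = 1) (s : ℝ) (hs : 0 < s)
    (A : Matrix (Fin n) (Fin n) ℝ) (hA : A.det ≠ 0) (i : Fin n) :
    ∑ r, Ctr (cmSx (s • (M * A))) r * (s • (M * A)) r i = s ^ 2 * ∑ r, Ctr (cmSx A) r * A r i := by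
  have h := h1 (fun x => s • WithLp.toLp 2 (M *ᵥ x.ofLp)) ⟨s, hs, fun x y => by
    rw [dist_smul₀, cm_isom M hM, Real.norm_of_nonneg hs.le]⟩ (cmSx A) (cm_sx_aff A hA)
  have e : (fun x : EuclideanSpace ℝ (Fin n) => s • WithLp.toLp 2 (M *ᵥ x.ofLp)) ∘ cmSx A = cmSx (s • (M * A)) := by
    ext c r
    refine Fin.cases ?_ (fun c => ?_) c
    · simp [cmSx]
    · simp [cmSx, cmCol, Matrix.mul_apply, Matrix.mulVec, dotProduct]
  rw [e] at h
  rw [h]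
  have : ∀ x y : Fin n → ℝ, ∑ r, (M *ᵥ x) r * (M *ᵥ y) r = ∑ r, x r * y r := by
    intro x y
    change (M *ᵥ x) ⬝ᵥ (M *ᵥ y) = x ⬝ᵥ y
    rw [Matrix.dotProduct_mulVec, Matrix.vecMul_mulVec, hM, Matrix.vecMul_one]
  have h2 := this (Ctr (cmSx A)).ofLp (fun r => A r i)
  rw [← h2, Finset.mul_sum]
  refine Finset.sum_congr rfl fun r _ => ?_
  simp only [Matrix.smul_apply, PiLp.smul_apply, smul_eq_mul, Matrix.mul_apply, Matrix.mulVec, dotProduct]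
  ring

open Matrix in
lemma cm_refl {n : ℕ} (u : Fin n → ℝ) (hu : u ≠ 0) :
    ∃ M : Matrix (Fin n) (Fin n) ℝ, Mᵀ * M = 1 ∧ M.det = -1 ∧
      ∀ A : Matrix (Fin n) (Fin n) ℝ, u ᵥ* A = 0 → M * A = A := by
  have hpos : u ⬝ᵥ u ≠ 0 := by
    simpa using hu
  refine ⟨1 - Matrix.vecMulVec ((2 / (u ⬝ᵥ u)) • u) u, ?_, ?_, ?_⟩
  · ext i j
    simp only [Matrix.transpose_sub, Matrix.transpose_one, Matrix.transpose_vecMulVec, Matrix.sub_mul, Matrix.mul_sub, Matrix.one_mul, Matrix.mul_one, Matrix.vecMulVec_mul_vecMulVec]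
    simp [Matrix.vecMulVec_apply]
    field_simp
    ring
  · rw [sub_eq_add_neg, ← Matrix.neg_vecMulVec, Matrix.vecMulVec_eq Unit, Matrix.det_one_add_replicateCol_mul_replicateRow]
    simp
    field_simp
    ring
  · intro A hA
    rw [Matrix.sub_mul, Matrix.vecMulVec_mul, hA]
    simp

open Matrix in
lemma cm_core {n : ℕ} (i : Fin n)
    (Ctr : (Fin (n+1) → EuclideanSpace ℝ (Fin n)) → EuclideanSpace ℝ (Fin n))
    (h1 : ∀ f : EuclideanSpace ℝ (Fin n) → EuclideanSpace ℝ (Fin n),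
      (∃ r : ℝ, 0 < r ∧ ∀ x y, dist (f x) (f y) = r * dist x y) →
      ∀ Δ : Fin (n+1) → EuclideanSpace ℝ (Fin n), AffineIndependent ℝ Δ →
        Ctr (f ∘ Δ) = f (Ctr Δ))
    (P : Fin n → MvPolynomial (Fin n × Fin (n+1)) ℝ)
    (h3 : ∀ Δ : Fin (n+1) → EuclideanSpace ℝ (Fin n), AffineIndependent ℝ Δ →
      ∀ ℓ : Fin n,
        (Matrix.of fun r c : Fin n => (Δ c.succ - Δ 0) r).det / n.factorial * Ctr Δ ℓ
          = MvPolynomial.eval (fun v => Δ v.2 v.1) (P ℓ)) :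
    ∃ a : Fin n → Fin n → ℝ, ∀ A : Matrix (Fin n) (Fin n) ℝ, A.det ≠ 0 →
      ∑ r, Ctr (cmSx A) r * A r i = ∑ j, ∑ k, a j k * ∑ r, A r j * A r k := by
  let sub : MvPolynomial (Fin n × Fin (n+1)) ℝ →ₐ[ℝ] MvPolynomial (Fin n × Fin n) ℝ :=
    MvPolynomial.aeval (fun v => (Fin.cons 0 (fun c => MvPolynomial.X (v.1, c)) : Fin (n+1) → MvPolynomial (Fin n × Fin n) ℝ) v.2)
  have hsub : ∀ (A : Matrix (Fin n) (Fin n) ℝ) p, MvPolynomial.eval (fun v => A v.1 v.2) (sub p) =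
      MvPolynomial.eval (fun v => cmSx A v.2 v.1) p := by
    intro A p
    induction p using MvPolynomial.induction_on with
    | C a => simp [sub]
    | add p q hp hq => simp_all
    | mul_X p v hp =>
      rw [map_mul, map_mul, hp, map_mul]
      congr 1
      simp only [sub, MvPolynomial.aeval_X, MvPolynomial.eval_X]
      obtain ⟨r, c⟩ := v
      refine Fin.cases ?_ (fun c => ?_) c
      · simp [cmSx]
      · simp [cmSx, cmCol]
  let f : MvPolynomial (Fin n × Fin n) ℝ := ∑ ℓ, MvPolynomial.C (n.factorial : ℝ) * sub (P ℓ) * MvPolynomial.X (ℓ, i)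
  have hcont : ∀ f : MvPolynomial (Fin n × Fin n) ℝ, Continuous fun A : Matrix (Fin n) (Fin n) ℝ => MvPolynomial.eval (fun v => A v.1 v.2) f := by
    intro f
    exact (MvPolynomial.continuous_eval f).comp (by fun_prop)
  have hf : ∀ A : Matrix (Fin n) (Fin n) ℝ, A.det ≠ 0 → MvPolynomial.eval (fun v => A v.1 v.2) f = A.det * ∑ r, Ctr (cmSx A) r * A r i := by
    intro A hA
    simp only [f, map_sum, map_mul, MvPolynomial.eval_C, MvPolynomial.eval_X, hsub, Finset.mul_sum]
    refine Finset.sum_congr rfl fun ℓ _ => ?_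
    rw [← h3 _ (cm_sx_aff A hA), cm_sx_mat]
    have : (n.factorial : ℝ) ≠ 0 := by exact_mod_cast n.factorial_ne_zero
    field_simp
  have hf0 : ∀ A : Matrix (Fin n) (Fin n) ℝ, A.det = 0 → MvPolynomial.eval (fun v => A v.1 v.2) f = 0 := by
    intro A hA
    obtain ⟨u, hu, huA⟩ := Matrix.exists_vecMul_eq_zero_iff.2 hA
    obtain ⟨M, hM, hMd, hMA⟩ := cm_refl u hu
    have := cm_dense (fun A => MvPolynomial.eval (fun v => (M * A) v.1 v.2) f + MvPolynomial.eval (fun v => A v.1 v.2) f)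
      (((hcont f).comp (continuous_const.matrix_mul continuous_id)).add (hcont f)) (fun B hB => by
        have e := cm_equivar Ctr h1 M hM 1 one_pos B hB i
        rw [one_smul] at e
        rw [hf B hB, hf (M * B) (by rw [Matrix.det_mul, hMd]; simpa using hB), e, Matrix.det_mul, hMd]
        ring) A
    simp only [hMA A huA] at this
    linarith
  obtain ⟨g, hg⟩ := cm_div f hf0
  have hgA : ∀ A : Matrix (Fin n) (Fin n) ℝ, A.det ≠ 0 → MvPolynomial.eval (fun v => A v.1 v.2) g = ∑ r, Ctr (cmSx A) r * A r i := by
    intro A hA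
    have := hf A hA
    rw [hg, map_mul, Matrix.eval_det_mvPolynomialX] at this
    exact mul_left_cancel₀ hA this
  have hinv : ∀ (M : Matrix (Fin n) (Fin n) ℝ) (hM : Mᵀ * M = 1) (s : ℝ) (hs : 0 < s) (A : Matrix (Fin n) (Fin n) ℝ),
      MvPolynomial.eval (fun v => (s • (M * A)) v.1 v.2) g = s^2 * MvPolynomial.eval (fun v => A v.1 v.2) g := by
    intro M hM s hs A
    rw [← sub_eq_zero]
    refine cm_dense (fun A => MvPolynomial.eval (fun v => (s • (M * A)) v.1 v.2) g - s^2 * MvPolynomial.eval (fun v => A v.1 v.2) g) ?_ ?_ A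
    · exact ((hcont g).comp ((continuous_const.matrix_mul continuous_id).const_smul s)).sub ((hcont g).const_mul _)
    · intro B hB
      have hMd : M.det ≠ 0 := by
        intro h
        have := congrArg Matrix.det hM
        rw [Matrix.det_mul, h] at this
        simp at this
      rw [hgA B hB, hgA, cm_equivar Ctr h1 M hM s hs B hB i, sub_self]
      rw [Matrix.det_smul, Matrix.det_mul]
      exact mul_ne_zero (pow_ne_zero _ hs.ne') (mul_ne_zero hMd hB)
  obtain ⟨c, hc, hcg⟩ := cm_quad g (fun s hs x => by
    have := hinv 1 (by simp) s hs (Matrix.of fun a b => x (a, b))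
    simpa using this)
  refine ⟨fun j k => c (i, j) (i, k), fun A hA => ?_⟩
  rw [← hgA A hA, hcg]
  refine cm_inv i c hc (fun r x => ?_) (fun σ x => ?_) (fun v => A v.1 v.2)
  · have := hinv (Matrix.diagonal fun p => if p = r then -1 else 1) (by
      rw [Matrix.diagonal_transpose, Matrix.diagonal_mul_diagonal, ← Matrix.diagonal_one]
      congr 1
      ext p
      split_ifs <;> simp) 1 one_pos (Matrix.of fun a b => x (a, b))
    simp only [one_smul, Matrix.diagonal_mul, Matrix.of_apply, one_pow, one_mul, hcg] at this
    exact this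
  · have := hinv (σ.permMatrix ℝ) (by
      rw [Matrix.transpose_permMatrix, ← Matrix.permMatrix_mul]
      simp) 1 one_pos (Matrix.of fun a b => x (a, b))
    simp only [one_smul, PEquiv.toMatrix_toPEquiv_mul, Matrix.submatrix_apply, Matrix.of_apply, one_pow, one_mul, hcg, id] at this
    exact this

lemma cm_cheb {m : ℕ} (β h : Fin m → ℝ) (H : ∀ a b, (β a - β b) * (h a - h b) = 0) :
    (m : ℝ) * ∑ t, β t * h t = (∑ t, β t) * ∑ t, h t := by
  have h0 : ∑ a, ∑ b, (β a - β b) * (h a - h b) = 0 := by simp [H]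
  have e : ∀ a b, (β a - β b) * (h a - h b) = β a * h a + β b * h b - β a * h b - h a * β b := by
    intros; ring
  simp only [e, Finset.sum_sub_distrib, Finset.sum_add_distrib, ← Finset.mul_sum, ← Finset.sum_mul] at h0
  simp at h0
  have e2 : ∑ x, β x * ((m : ℝ) * h x) = m * ∑ x, β x * h x := by
    rw [Finset.mul_sum]
    exact Finset.sum_congr rfl fun x _ => by ring
  rw [e2] at h0
  linarith

lemma cm_sym1 {m : ℕ} (b : Fin (m+2) → Fin (m+2) → ℝ) (D : Fin (m+2) → Fin (m+2) → ℝ)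
    (hD : ∀ j k, D j k = D k j) (hD0 : ∀ j, D j j = 0) :
    ∑ j, ∑ k, b j k * D j k - ∑ j, ∑ k, b j k * D (Equiv.swap 0 1 j) (Equiv.swap 0 1 k) =
      ∑ t : Fin m, (b 0 t.succ.succ + b t.succ.succ 0 - b 1 t.succ.succ - b t.succ.succ 1) *
        (D 0 t.succ.succ - D 1 t.succ.succ) := by
  have ht : ∀ t : Fin m, Equiv.swap (0 : Fin (m+2)) 1 t.succ.succ = t.succ.succ := by
    intro t
    apply Equiv.swap_apply_of_ne_of_ne
    · exact Fin.succ_ne_zero _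
    · intro h
      exact Fin.succ_ne_zero t (Fin.succ_injective _ h)
  have d0 : ∀ t : Fin m, D t.succ.succ 0 = D 0 t.succ.succ := fun t => hD _ _
  have d1 : ∀ t : Fin m, D t.succ.succ 1 = D 1 t.succ.succ := fun t => hD _ _
  simp only [Fin.sum_univ_succ (n := m+1), Fin.sum_univ_succ (n := m), ht, Fin.succ_zero_eq_one,
    Equiv.swap_apply_left, Equiv.swap_apply_right, hD0, hD 1 0, d0, d1]
  have e : ∀ t : Fin m, (b 0 t.succ.succ + b t.succ.succ 0 - b 1 t.succ.succ - b t.succ.succ 1) *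
        (D 0 t.succ.succ - D 1 t.succ.succ) =
        b 0 t.succ.succ * D 0 t.succ.succ - b 0 t.succ.succ * D 1 t.succ.succ
        + (b t.succ.succ 0 * D 0 t.succ.succ + b t.succ.succ 1 * D 1 t.succ.succ)
        - (b t.succ.succ 0 * D 1 t.succ.succ + b t.succ.succ 1 * D 0 t.succ.succ)
        - b 1 t.succ.succ * D 0 t.succ.succ + b 1 t.succ.succ * D 1 t.succ.succ := by
    intro t; ring
  simp only [e, Finset.sum_add_distrib, Finset.sum_sub_distrib]
  ring_nf

lemma cm_sym {m : ℕ} (b : Fin (m+2) → Fin (m+2) → ℝ) :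
    ∃ α : ℝ, ∀ (D : Fin (m+2) → Fin (m+2) → ℝ) (x : Fin (m+2) → ℝ)
    (hD : ∀ j k, D j k = D k j) (hD0 : ∀ j, D j j = 0)
    (H : ∀ σ : Equiv.Perm (Fin (m+2)), x (σ 0) - x (σ 1) = ∑ j, ∑ k, b j k * D (σ j) (σ k)),
    x 0 - x 1 = α * ∑ k, (D 0 k - D 1 k) := by
  let β : Fin m → ℝ := fun t => b 0 t.succ.succ + b t.succ.succ 0 - b 1 t.succ.succ - b t.succ.succ 1
  refine ⟨(∑ t, β t) / (2 * m), fun D x hD hD0 H => ?_⟩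
  let h : Fin m → ℝ := fun t => D 0 t.succ.succ - D 1 t.succ.succ
  have hs : ∑ k, (D 0 k - D 1 k) = ∑ t, h t := by
    simp only [Fin.sum_univ_succ (n := m+1), Fin.sum_univ_succ (n := m), h, Fin.succ_zero_eq_one, hD0, hD 1 0]
    ring
  have h0 : ∀ σ : Equiv.Perm (Fin m), 2 * (x 0 - x 1) = ∑ t, β t * h (σ t) := by
    intro σ
    obtain ⟨σ', s0, s1, st⟩ : ∃ σ' : Equiv.Perm (Fin (m+2)), σ' 0 = 0 ∧ σ' 1 = 1 ∧ ∀ t : Fin m, σ' t.succ.succ = (σ t).succ.succ := by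
      refine ⟨Equiv.Perm.decomposeFin.symm (0, Equiv.Perm.decomposeFin.symm (0, σ)), ?_, ?_, ?_⟩
      · simp
      · rw [← Fin.succ_zero_eq_one, Equiv.Perm.decomposeFin_symm_apply_succ]; simp
      · intro t
        rw [Equiv.Perm.decomposeFin_symm_apply_succ, Equiv.Perm.decomposeFin_symm_apply_succ]; simp
    have e1 := H σ'
    have e2 := H (σ' * Equiv.swap 0 1)
    have e3 := cm_sym1 b (fun j k => D (σ' j) (σ' k)) (fun j k => hD _ _) (fun j => hD0 _)
    simp only [Equiv.Perm.mul_apply, Equiv.swap_apply_left, Equiv.swap_apply_right, s0, s1, st] at e1 e2 e3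
    have : 2 * (x 0 - x 1) = (x 0 - x 1) - (x 1 - x 0) := by ring
    rw [this, e1, e2, e3]
  have hch := cm_cheb β h (fun a c => by
    by_cases hac : a = c
    · simp [hac]
    have e := (h0 1).symm.trans (h0 (Equiv.swap a c))
    rw [← sub_eq_zero, ← Finset.sum_sub_distrib, Fintype.sum_eq_add a c hac] at e
    · simp at e; linarith
    · intro t ht
      rw [Equiv.swap_apply_of_ne_of_ne ht.1 ht.2]; simp)
  have h1 := h0 1
  simp only [Equiv.Perm.coe_one, id] at h1
  rw [hs]
  rcases Nat.eq_zero_or_pos m with hm | hm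
  · subst hm
    simp at h1
    simp; linarith
  · have : (m:ℝ) ≠ 0 := by positivity
    field_simp
    rw [← hch, ← h1]; ring

lemma cm_lin {m : ℕ}
    (Ctr : (Fin (m+1+1) → EuclideanSpace ℝ (Fin (m+1))) → EuclideanSpace ℝ (Fin (m+1)))
    (h1 : ∀ f : EuclideanSpace ℝ (Fin (m+1)) → EuclideanSpace ℝ (Fin (m+1)),
      (∃ r : ℝ, 0 < r ∧ ∀ x y, dist (f x) (f y) = r * dist x y) →
      ∀ Δ : Fin (m+1+1) → EuclideanSpace ℝ (Fin (m+1)), AffineIndependent ℝ Δ →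
        Ctr (f ∘ Δ) = f (Ctr Δ))
    (a : Fin (m+1) → Fin (m+1) → ℝ) (ha : ∀ A : Matrix (Fin (m+1)) (Fin (m+1)) ℝ, A.det ≠ 0 →
      ∑ r, Ctr (cmSx A) r * A r 0 = ∑ j, ∑ k, a j k * ∑ r, A r j * A r k) :
    ∃ b : Fin (m+2) → Fin (m+2) → ℝ, ∀ Δ : Fin (m+1+1) → EuclideanSpace ℝ (Fin (m+1)), AffineIndependent ℝ Δ →
      dist (Ctr Δ) (Δ 0) ^ 2 - dist (Ctr Δ) (Δ 1) ^ 2 = ∑ j, ∑ k, b j k * dist (Δ j) (Δ k) ^ 2 := by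
  let pr : Fin (m+2) → Fin (m+2) → ((Fin (m+2) × Fin (m+2) → ℝ) →ₗ[ℝ] ℝ) := fun j k => LinearMap.proj (j, k)
  let L : (Fin (m+2) × Fin (m+2) → ℝ) →ₗ[ℝ] ℝ :=
    (∑ j, ∑ k, a j k • (pr 0 (Fin.succ j) + pr 0 (Fin.succ k) - pr (Fin.succ j) (Fin.succ k))) - pr 0 1
  refine ⟨fun j k => L (Pi.single (j, k) 1), fun Δ hΔ => ?_⟩
  have hL : ∀ D : Fin (m+2) × Fin (m+2) → ℝ, ∑ j, ∑ k, L (Pi.single (j, k) 1) * D (j, k) = L D := by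
    intro D
    rw [LinearMap.pi_apply_eq_sum_univ L D, Fintype.sum_prod_type]
    refine Finset.sum_congr rfl fun j _ => Finset.sum_congr rfl fun k _ => ?_
    rw [smul_eq_mul, mul_comm]
    congr 2
    ext p
    simp [Pi.single_apply, eq_comm]
  rw [hL (fun p => dist (Δ p.1) (Δ p.2) ^ 2)]
  set A : Matrix (Fin (m+1)) (Fin (m+1)) ℝ := Matrix.of fun r c => (Δ c.succ - Δ 0) r with hA
  have hdet := (cm_aff Δ).1 hΔ
  have e := h1 (fun x => x + Δ 0) ⟨1, one_pos, by simp⟩ (cmSx A) (cm_sx_aff A hdet)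
  have e2 : (fun x => x + Δ 0) ∘ cmSx A = Δ := by
    ext c r
    refine Fin.cases ?_ (fun c => ?_) c
    · simp [cmSx]
    · simp [cmSx, cmCol, hA]
  rw [e2] at e
  have key := ha A hdet
  have inn : ∀ x y : EuclideanSpace ℝ (Fin (m+1)), ∑ r, x r * y r = inner ℝ x y := by
    intro x y
    simp [PiLp.inner_apply, mul_comm]
  have k1 : ∑ r, Ctr (cmSx A) r * A r 0 = inner ℝ (Ctr Δ - Δ 0) (Δ 1 - Δ 0) := by
    rw [e, add_sub_cancel_right, ← inn]; rfl
  have k2 : ∀ j k, ∑ r, A r j * A r k = inner ℝ (Δ j.succ - Δ 0) (Δ k.succ - Δ 0) := by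
    intro j k
    rw [← inn]; rfl
  simp only [k1, k2] at key
  have pol : ∀ x y z : EuclideanSpace ℝ (Fin (m+1)), 2 * inner ℝ (x - z) (y - z) = dist z x ^ 2 + dist z y ^ 2 - dist x y ^ 2 := by
    intro x y z
    have : x - y = (x - z) - (y - z) := by abel
    rw [dist_comm z x, dist_comm z y, dist_eq_norm, dist_eq_norm, dist_eq_norm, this, norm_sub_sq_real (x - z) (y - z)]
    ring
  have p1 := pol (Ctr Δ) (Δ 1) (Δ 0)
  rw [key] at p1
  simp only [L, pr, LinearMap.sub_apply, LinearMap.sum_apply, LinearMap.smul_apply, LinearMap.add_apply, LinearMap.proj_apply, smul_eq_mul, ← pol]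
  have : ∑ j, ∑ k, a j k * (2 * inner ℝ (Δ j.succ - Δ 0) (Δ k.succ - Δ 0)) = 2 * ∑ j, ∑ k, a j k * inner ℝ (Δ j.succ - Δ 0) (Δ k.succ - Δ 0) := by
    simp only [Finset.mul_sum]
    refine Finset.sum_congr rfl fun j _ => Finset.sum_congr rfl fun k _ => ?_
    ring
  rw [this, p1, dist_comm (Δ 0) (Ctr Δ)]
  ring

theorem circumcenter_of_mass_uniqueness (n : ℕ) (hn : 1 ≤ n)
    (Ctr : (Fin (n+1) → EuclideanSpace ℝ (Fin n)) → EuclideanSpace ℝ (Fin n))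
    -- (1) `Ctr` commutes with all similarities (orientation-preserving or not)
    (h1 : ∀ f : EuclideanSpace ℝ (Fin n) → EuclideanSpace ℝ (Fin n),
      (∃ r : ℝ, 0 < r ∧ ∀ x y, dist (f x) (f y) = r * dist x y) →
      ∀ Δ : Fin (n+1) → EuclideanSpace ℝ (Fin n), AffineIndependent ℝ Δ →
        Ctr (f ∘ Δ) = f (Ctr Δ))
    -- (2) `Ctr` is invariant under permutations of the vertices
    (h2 : ∀ Δ : Fin (n+1) → EuclideanSpace ℝ (Fin n), AffineIndependent ℝ Δ →
      ∀ σ : Equiv.Perm (Fin (n+1)), Ctr (Δ ∘ σ) = Ctr Δ)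
    -- (3) `Vol(Δ) · Ctr(Δ)` is polynomial in the coordinates of the vertices
    (h3 : ∃ P : Fin n → MvPolynomial (Fin n × Fin (n+1)) ℝ,
      ∀ Δ : Fin (n+1) → EuclideanSpace ℝ (Fin n), AffineIndependent ℝ Δ →
      ∀ ℓ : Fin n,
        signedVol n Δ * Ctr Δ ℓ = MvPolynomial.eval (fun v => Δ v.2 v.1) (P ℓ)) :
    ∃ t : ℝ, ∀ (Δ : Fin (n+1) → EuclideanSpace ℝ (Fin n)) (hΔ : AffineIndependent ℝ Δ),
      Ctr Δ = t • Finset.centroid ℝ Finset.univ Δ +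
        (1 - t) • (Affine.Simplex.mk Δ hΔ).circumcenter := by
  obtain ⟨m, rfl⟩ : ∃ m, n = m + 1 := ⟨n - 1, by omega⟩
  obtain ⟨P, hP⟩ := h3
  obtain ⟨a, ha⟩ := cm_core 0 Ctr h1 P hP
  obtain ⟨b, hb⟩ := cm_lin Ctr h1 a ha
  obtain ⟨α, hα⟩ := cm_sym b
  have perm : ∀ Δ : Fin (m+1+1) → EuclideanSpace ℝ (Fin (m+1)), AffineIndependent ℝ Δ →
      ∀ σ : Equiv.Perm (Fin (m+1+1)), AffineIndependent ℝ (Δ ∘ σ) := fun Δ hΔ σ =>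
    hΔ.comp_embedding σ.toEmbedding
  have h01 : ∀ Δ : Fin (m+1+1) → EuclideanSpace ℝ (Fin (m+1)), AffineIndependent ℝ Δ →
      dist (Ctr Δ) (Δ 0) ^ 2 - dist (Ctr Δ) (Δ 1) ^ 2 =
        α * ∑ k, (dist (Δ 0) (Δ k) ^ 2 - dist (Δ 1) (Δ k) ^ 2) := by
    intro Δ hΔ
    refine hα (fun j k => dist (Δ j) (Δ k) ^ 2) (fun k => dist (Ctr Δ) (Δ k) ^ 2)
      (fun j k => by rw [dist_comm]) (fun j => by simp) fun σ => ?_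
    have := hb (Δ ∘ σ) (perm Δ hΔ σ)
    rw [h2 Δ hΔ σ] at this
    exact this
  have h0i : ∀ Δ : Fin (m+1+1) → EuclideanSpace ℝ (Fin (m+1)), AffineIndependent ℝ Δ → ∀ i, i ≠ 0 →
      dist (Ctr Δ) (Δ 0) ^ 2 - dist (Ctr Δ) (Δ i) ^ 2 =
        α * ∑ k, (dist (Δ 0) (Δ k) ^ 2 - dist (Δ i) (Δ k) ^ 2) := by
    intro Δ hΔ i hi
    have := h01 (Δ ∘ Equiv.swap 1 i) (perm Δ hΔ _)
    rw [h2 Δ hΔ] at this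
    have z : Equiv.swap (1 : Fin (m+1+1)) i 0 = 0 := Equiv.swap_apply_of_ne_of_ne (by simp) hi.symm
    simp only [Function.comp, z, Equiv.swap_apply_left] at this
    rw [this, Equiv.sum_comp (Equiv.swap 1 i) (fun k => dist (Δ 0) (Δ k) ^ 2 - dist (Δ i) (Δ k) ^ 2)]
  refine ⟨α * (m + 2), fun Δ hΔ => ?_⟩
  set M := Finset.centroid ℝ Finset.univ Δ with hM
  set O := (Affine.Simplex.mk Δ hΔ).circumcenter with hO
  set t : ℝ := α * (m + 2) with ht
  have hMs : ((m:ℝ) + 2) • M = ∑ k, Δ k := by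
    rw [hM, Finset.centroid_def, Finset.affineCombination_eq_linear_combination _ _ _ (Finset.sum_centroidWeights_eq_one_of_nonempty ℝ _ Finset.univ_nonempty)]
    simp only [Finset.centroidWeights_apply, ← Finset.smul_sum, smul_smul]
    have : ((m:ℝ) + 2) * ((Finset.univ : Finset (Fin (m+1+1))).card : ℝ)⁻¹ = 1 := by
      rw [Finset.card_univ, Fintype.card_fin]
      push_cast
      field_simp
      ring
    rw [this, one_smul]
  have phi : ∀ (X : EuclideanSpace ℝ (Fin (m+1))) (i : Fin (m+1+1)), dist X (Δ 0) ^ 2 - dist X (Δ i) ^ 2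
      = ‖Δ 0‖^2 - ‖Δ i‖^2 + 2 * inner ℝ X (Δ i - Δ 0) := by
    intro X i
    rw [dist_eq_norm, dist_eq_norm, norm_sub_sq_real, norm_sub_sq_real, inner_sub_right]
    ring
  have orth : ∀ i, i ≠ 0 → inner ℝ (Ctr Δ - (t • M + (1 - t) • O)) (Δ i - Δ 0) = 0 := by
    intro i hi
    have e1 := h0i Δ hΔ i hi
    have e2 : dist O (Δ 0) ^ 2 - dist O (Δ i) ^ 2 = 0 := by
      have a0 := (Affine.Simplex.mk Δ hΔ).dist_circumcenter_eq_circumradius' 0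
      have a1 := (Affine.Simplex.mk Δ hΔ).dist_circumcenter_eq_circumradius' i
      rw [← hO] at a0 a1
      simp only at a0 a1
      rw [a0, a1, sub_self]
    have e3 : ∑ k, (dist (Δ 0) (Δ k) ^ 2 - dist (Δ i) (Δ k) ^ 2) =
        (m + 2) * (‖Δ 0‖^2 - ‖Δ i‖^2) + 2 * ((m + 2) * inner ℝ M (Δ i - Δ 0)) := by
      rw [← real_inner_smul_left, hMs, sum_inner]
      simp only [dist_comm (Δ 0), dist_comm (Δ i), phi, Finset.sum_add_distrib, ← Finset.mul_sum]
      simp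
      ring
    rw [e3, phi] at e1
    rw [phi] at e2
    rw [inner_sub_left, inner_add_left, real_inner_smul_left, real_inner_smul_left, ht]
    linear_combination e1 / 2 - (1 - α * (m + 2)) * e2 / 2
  have hdet := (cm_aff Δ).1 hΔ
  rw [← sub_eq_zero]
  set w := Ctr Δ - (t • M + (1 - t) • O) with hw
  have hw0 : w.ofLp = 0 := by
    refine Matrix.eq_zero_of_vecMul_eq_zero hdet ?_
    ext c
    have := orth c.succ (Fin.succ_ne_zero c)
    simpa [PiLp.inner_apply, Matrix.vecMul, dotProduct, mul_comm] using this
  ext r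
  rw [hw0]; rfl
end

section
/- The polynomials X_{i,jk} with 1 ≤ i ≤ n and 1 ≤ j ≤ k ≤ n (there are n²(n+1)/2 of them) are linearly independent over ℝ. -/
/-- The `(n+1) × (n+1)` matrix whose `j`-th column is `(x_1^j, …, x_n^j, 1)`,
with entries in the polynomial ring in the variables `x_i^j`
(a variable is a pair `(i, j) : Fin n × Fin (n+1)`, `i` the coordinate index, `j` the vertex index). -/
noncomputable def Vmat (n : ℕ) : Matrix (Fin (n+1)) (Fin (n+1)) (MvPolynomial (Fin n × Fin (n+1)) ℝ) :=
  Matrix.of fun r c => if h : (r : ℕ) < n then MvPolynomial.X (⟨r, h⟩, c) else 1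

/-- The basic determinant `V`. -/
noncomputable def Vpoly (n : ℕ) : MvPolynomial (Fin n × Fin (n+1)) ℝ := (Vmat n).det

/-- The matrix of `V` with its `i`-th row replaced by `(x_j^0 x_k^0, …, x_j^n x_k^n)`. -/
noncomputable def Xmat (n : ℕ) (i j k : Fin n) :
    Matrix (Fin (n+1)) (Fin (n+1)) (MvPolynomial (Fin n × Fin (n+1)) ℝ) :=
  Matrix.of fun r c =>
    if (r : ℕ) = (i : ℕ) then MvPolynomial.X (j, c) * MvPolynomial.X (k, c)
    else if h : (r : ℕ) < n then MvPolynomial.X (⟨r, h⟩, c) else 1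

/-- The basic determinant `X_{i,jk}`. -/
noncomputable def Xpoly (n : ℕ) (i j k : Fin n) : MvPolynomial (Fin n × Fin (n+1)) ℝ :=
  (Xmat n i j k).det


/-- evaluation point: vertex `i` is `t • p`, vertex `m ≠ i` is `e_m`, last vertex is `0`. -/
noncomputable def evPt (n : ℕ) (i : Fin n) (p : Fin n → ℝ) (t : ℝ) : Fin n × Fin (n+1) → ℝ :=
  fun q => Fin.lastCases (motive := fun _ => ℝ) 0
    (fun c => if c = i then t * p q.1 else if q.1 = c then 1 else 0) q.2

/-- the reduced `n × n` matrix. -/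
noncomputable def Nmat (n : ℕ) (i : Fin n) (p : Fin n → ℝ) (t : ℝ) (r j k : Fin n) :
    Matrix (Fin n) (Fin n) ℝ :=
  Matrix.of fun m c =>
    if m = r then evPt n i p t (j, c.castSucc) * evPt n i p t (k, c.castSucc)
    else evPt n i p t (m, c.castSucc)

theorem eval_Xpoly (n : ℕ) (i : Fin n) (p : Fin n → ℝ) (t : ℝ) (r j k : Fin n) :
    MvPolynomial.eval (evPt n i p t) (Xpoly n r j k) = (Nmat n i p t r j k).det := by
  unfold Xpoly
  rw [RingHom.map_det, Matrix.det_succ_column _ (Fin.last n), Fin.sum_univ_castSucc,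
    Finset.sum_eq_zero]
  · have h : ¬ (n = (r : ℕ)) := by omega
    have e : ((MvPolynomial.eval (evPt n i p t)).mapMatrix (Xmat n r j k)).submatrix
        (Fin.last n).succAbove (Fin.last n).succAbove = Nmat n i p t r j k := by
      ext m c
      simp only [Fin.succAbove_last, Matrix.submatrix_apply, RingHom.mapMatrix_apply,
        Matrix.map_apply, Xmat, Nmat, Matrix.of_apply, Fin.val_castSucc, Fin.val_inj]
      split_ifs <;> simp_all
    rw [e]
    have hl : ((MvPolynomial.eval (evPt n i p t)).mapMatrix (Xmat n r j k))
        (Fin.last n) (Fin.last n) = 1 := by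
      simp [Xmat, h]
    rw [hl]
    simp [← two_mul, pow_mul]
  · intro m _
    have hl : ((MvPolynomial.eval (evPt n i p t)).mapMatrix (Xmat n r j k))
        m.castSucc (Fin.last n) = 0 := by
      simp only [RingHom.mapMatrix_apply, Matrix.map_apply, Xmat, Matrix.of_apply,
        Fin.val_castSucc, Fin.val_inj]
      split_ifs <;> simp_all [evPt]
    rw [hl]; ring

theorem Nmat_col (n : ℕ) (i : Fin n) (p : Fin n → ℝ) (t : ℝ) (r j k : Fin n) :
    Nmat n i p t r j k = (Nmat n i p 0 r j k).updateCol i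
      (t • (fun m => if m = r then 0 else p m) + (t^2 * (p j * p k)) • Pi.single r 1) := by
  ext m c
  by_cases hc : c = i
  · subst hc
    by_cases hm : m = r
    · subst hm; simp [Nmat, evPt]; ring
    · simp [Nmat, evPt, hm]
  · simp [Nmat, evPt, hc, Matrix.updateCol_apply]

theorem det_single (n : ℕ) (i : Fin n) (p : Fin n → ℝ) (r j k : Fin n) :
    ((Nmat n i p 0 r j k).updateCol i (Pi.single r 1)).det = if r = i then 1 else 0 := by
  split_ifs with h
  · subst h
    have : (Nmat n r p 0 r j k).updateCol r (Pi.single r 1) =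
        (1 : Matrix (Fin n) (Fin n) ℝ).updateRow r
          (((Nmat n r p 0 r j k).updateCol r (Pi.single r 1)) r) := by
      ext m c
      by_cases hm : m = r
      · subst hm; simp
      · by_cases hc : c = r
        · subst hc; simp [hm]
        · simp [Nmat, evPt, hm, hc, Matrix.updateCol_apply, Matrix.one_apply]
    rw [this, ← Matrix.cramer_transpose_apply]
    simp
  · have key : ((Nmat n i p 0 r j k).updateCol i (Pi.single r 1)) =
      (((Nmat n i p 0 r j k).updateCol i (Pi.single r 1))).updateCol r
        ((Nmat n i p 0 r j k r r) • Pi.single r 1) := by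
      ext m c
      by_cases hc : c = r
      · subst hc
        by_cases hm : m = c
        · subst hm; simp [Matrix.updateCol_apply, h]
        · simp [Nmat, evPt, hm, h]
          split_ifs <;> simp [hm]
      · simp [Matrix.updateCol_apply, hc]
    rw [key, Matrix.det_updateCol_smul]
    rw [Matrix.det_zero_of_column_eq h, mul_zero]
    intro m
    simp [Matrix.updateCol_apply, Ne.symm h]

theorem eval_sum (n : ℕ) (i : Fin n) (p : Fin n → ℝ) (r j k : Fin n) :
    MvPolynomial.eval (evPt n i p 1) (Xpoly n r j k) +
    MvPolynomial.eval (evPt n i p (-1)) (Xpoly n r j k) =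
      2 * (if r = i then p j * p k else 0) := by
  rw [eval_Xpoly, eval_Xpoly, Nmat_col n i p 1, Nmat_col n i p (-1)]
  simp only [Matrix.det_updateCol_add, Matrix.det_updateCol_smul, det_single]
  split_ifs <;> ring

/-- The polynomials `X_{i,jk}`, `1 ≤ i ≤ n`, `1 ≤ j ≤ k ≤ n`, are linearly independent over `ℝ`. -/
theorem Xpoly_linearIndependent (n : ℕ) (hn : 1 ≤ n) :
    LinearIndependent ℝ
      (fun p : {p : Fin n × Fin n × Fin n // p.2.1 ≤ p.2.2} =>
        Xpoly n p.1.1 p.1.2.1 p.1.2.2) := by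
  rw [Fintype.linearIndependent_iff]
  intro g hg q
  have H : ∀ (i : Fin n) (x : Fin n → ℝ),
      ∑ p, g p * (if p.1.1 = i then x p.1.2.1 * x p.1.2.2 else 0) = 0 := by
    intro i x
    have h1 := congrArg (MvPolynomial.eval (evPt n i x 1)) hg
    have h2 := congrArg (MvPolynomial.eval (evPt n i x (-1))) hg
    simp only [map_sum, MvPolynomial.smul_eval, map_zero] at h1 h2
    have h3 : ∑ p, g p * (2 * (if p.1.1 = i then x p.1.2.1 * x p.1.2.2 else 0)) = 0 := by
      simp only [← eval_sum, mul_add, Finset.sum_add_distrib]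
      rw [h1, h2, add_zero]
    have h4 : 2 * ∑ p, g p * (if p.1.1 = i then x p.1.2.1 * x p.1.2.2 else 0) = 0 := by
      refine Eq.trans ?_ h3
      rw [Finset.mul_sum]
      exact Finset.sum_congr rfl fun _ _ => by ring
    linarith
  obtain ⟨⟨i, j, k⟩, hjk⟩ := q
  let u : Fin n → ℝ := Pi.single j 1
  let v : Fin n → ℝ := Pi.single k 1
  have K : ∑ p, g p * (if p.1.1 = i then u p.1.2.1 * v p.1.2.2 + v p.1.2.1 * u p.1.2.2 else 0)
      = 0 := by
    have := H i (u + v)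
    have hu := H i u
    have hv := H i v
    have e := congrArg₂ (fun a b : ℝ => a - b) (congrArg₂ (fun a b : ℝ => a - b) this hu) hv
    simp only [← Finset.sum_sub_distrib, sub_zero] at e
    refine Eq.trans ?_ e
    refine Finset.sum_congr rfl fun p _ => ?_
    simp only [Pi.add_apply]
    split_ifs <;> ring
  rw [Finset.sum_eq_single ⟨(i, j, k), hjk⟩] at K
  · rcases mul_eq_zero.1 K with h | h
    · exact h
    · exfalso
      by_cases e : j = k
      · subst e; simp [u, v] at h
      · simp [u, v, Pi.single_apply, e, Ne.symm e] at h
  · rintro ⟨⟨a, b, c⟩, hbc⟩ _ hne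
    simp only [ne_eq, Subtype.mk.injEq, Prod.mk.injEq] at hne
    simp only at hbc hjk
    simp only [u, v, Pi.single_apply]
    by_cases ha : a = i
    · have h1 : ¬ (b = j ∧ c = k) := fun h => hne ⟨ha, h.1, h.2⟩
      have h2 : ¬ (b = k ∧ c = j) := by
        rintro ⟨rfl, rfl⟩
        exact h1 ⟨le_antisymm hbc hjk, le_antisymm hjk hbc⟩
      simp only [ha, if_true]
      have e1 : ((if b = j then (1:ℝ) else 0) * if c = k then 1 else 0) = 0 := by
        rcases not_and_or.1 h1 with h | h <;> rw [if_neg h] <;> simp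
      have e2 : ((if b = k then (1:ℝ) else 0) * if c = j then 1 else 0) = 0 := by
        rcases not_and_or.1 h2 with h | h <;> rw [if_neg h] <;> simp
      rw [e1, e2]; simp
    · simp [ha]
  · simp
end

section
/- Every polynomial f in the variables x_i^j that is homogeneous of degree n+1 and skew-symmetric under the action of S_{n+1} permuting the superscripts (i.e., σ·f = sgn(σ)·f for all σ ∈ S_{n+1}) is a real linear combination of the polynomials X_{i,jk}, 1 ≤ i, j, k ≤ n. -/
/-- The action of `S_{n+1}` on the polynomial ring by permuting the superscripts `j`. -/
noncomputable def permAct (n : ℕ) (σ : Equiv.Perm (Fin (n+1))) :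
    MvPolynomial (Fin n × Fin (n+1)) ℝ →+* MvPolynomial (Fin n × Fin (n+1)) ℝ :=
  (MvPolynomial.rename ((Equiv.refl (Fin n)).prodCongr σ)).toRingHom

lemma aux_sum_one {α : Type*} [Fintype α] [DecidableEq α] (f : α → ℕ) (h : ∑ a, f a = 1) :
    ∃ a, f = Pi.single a 1 := by
  have h1 : ∃ a, f a ≠ 0 := by
    by_contra! hc
    simp [hc] at h
  obtain ⟨a, ha⟩ := h1
  refine ⟨a, ?_⟩
  rw [← Finset.add_sum_erase _ _ (Finset.mem_univ a)] at h
  have h2 : ∑ x ∈ Finset.univ.erase a, f x = 0 := by omega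
  rw [Finset.sum_eq_zero_iff] at h2
  funext b
  by_cases hb : b = a
  · subst hb; simp; omega
  · simp [hb, h2 b (by simp [hb])]

lemma aux_sum_two {α : Type*} [Fintype α] [DecidableEq α] (f : α → ℕ) (h : ∑ a, f a = 2) :
    ∃ a b, f = Pi.single a 1 + Pi.single b 1 := by
  have h1 : ∃ a, f a ≠ 0 := by
    by_contra! hc
    simp [hc] at h
  obtain ⟨a, ha⟩ := h1
  have hf : f = Pi.single a 1 + (f - Pi.single a 1) := by
    funext b
    by_cases hb : b = a
    · subst hb; simp; omega
    · simp [hb]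
  have h2 : ∑ x, (f - Pi.single a 1 : α → ℕ) x = 1 := by
    rw [hf] at h
    simp only [Pi.add_apply, Finset.sum_add_distrib] at h
    simp only [Finset.sum_pi_single', Finset.mem_univ, if_true] at h
    omega
  obtain ⟨b, hb⟩ := aux_sum_one _ h2
  exact ⟨a, b, by rw [← hb]; exact hf⟩

noncomputable def Dmat (n : ℕ) (p : Fin (n+1) → Fin n → ℕ) :
    Matrix (Fin (n+1)) (Fin (n+1)) (MvPolynomial (Fin n × Fin (n+1)) ℝ) :=
  Matrix.of fun r c => ∏ i, MvPolynomial.X (i, c) ^ (p r i)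

lemma prod_single {n : ℕ} (c : Fin (n+1)) (j : Fin n) :
    (∏ i, (MvPolynomial.X (i, c) : MvPolynomial (Fin n × Fin (n+1)) ℝ) ^
      ((Pi.single j 1 : Fin n → ℕ) i)) = MvPolynomial.X (j, c) := by
  rw [Finset.prod_eq_single j]
  · simp
  · intro b _ hb; simp [hb]
  · simp

/-- combinatorial core -/
lemma core (n : ℕ) (p : Fin (n+1) → Fin n → ℕ) (hinj : Function.Injective p)
    (hsum : ∑ r, ∑ i, p r i = n + 1) :
    ∃ (τ : Equiv.Perm (Fin (n+1))) (i j k : Fin n), ∀ r,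
      (τ r = Fin.last n ∧ p r = 0) ∨
      (τ r = i.castSucc ∧ p r = Pi.single j 1 + Pi.single k 1) ∨
      (∃ l, l ≠ i ∧ τ r = l.castSucc ∧ p r = Pi.single l 1) := by
  have h0 : ∃ r0, p r0 = 0 := by
    by_contra! hc
    have hpos : ∀ r, 1 ≤ ∑ i, p r i := by
      intro r
      by_contra! h
      have : ∑ i, p r i = 0 := by omega
      rw [Finset.sum_eq_zero_iff] at this
      exact hc r (funext fun i => this i (Finset.mem_univ i))
    have h1 : ∀ r ∈ Finset.univ, 1 = ∑ i, p r i := by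
      rw [← Finset.sum_eq_sum_iff_of_le (fun r _ => hpos r)]
      simp [hsum]
    choose g hg using fun r => aux_sum_one (p r) (h1 r (Finset.mem_univ r)).symm
    have hgi : Function.Injective g := by
      intro a b hab
      apply hinj
      rw [hg a, hg b, hab]
    have := Fintype.card_le_of_injective g hgi
    simp at this
  obtain ⟨r0, hr0⟩ := h0
  have hpos : ∀ r, r ≠ r0 → 1 ≤ ∑ i, p r i := by
    intro r hr
    by_contra! h
    have : ∑ i, p r i = 0 := by omega
    rw [Finset.sum_eq_zero_iff] at this
    exact hr (hinj (by rw [hr0]; exact funext fun i => this i (Finset.mem_univ i)))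
  have he : ∑ r, ((∑ i, p r i) + (if r = r0 then 1 else 0) - 1) = 1 := by
    have h2 : ∑ r, ((∑ i, p r i) + (if r = r0 then 1 else 0) - 1) + ∑ r : Fin (n+1), 1
        = ∑ r, ((∑ i, p r i) + (if r = r0 then 1 else 0)) := by
      rw [← Finset.sum_add_distrib]
      refine Finset.sum_congr rfl fun r _ => ?_
      by_cases hr : r = r0
      · simp [hr]
      · have := hpos r hr
        simp [hr]; omega
    rw [Finset.sum_add_distrib (f := fun r => ∑ i, p r i), hsum] at h2
    simp at h2
    omega
  obtain ⟨r1, hr1⟩ := aux_sum_one _ he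
  have hr10 : r1 ≠ r0 := by
    rintro rfl
    have := congrFun hr1 r1
    simp [hr0] at this
  have hd1 : ∑ i, p r1 i = 2 := by
    have := congrFun hr1 r1
    simp [hr10] at this
    omega
  have hd : ∀ r, r ≠ r0 → r ≠ r1 → ∑ i, p r i = 1 := by
    intro r h h'
    have := congrFun hr1 r
    have h3 := hpos r h
    rw [Pi.single_eq_of_ne h'] at this
    simp only [h, if_false] at this
    omega
  obtain ⟨j, k, hjk⟩ := aux_sum_two _ hd1
  have hg : ∀ r, ∃ l, r ≠ r0 → r ≠ r1 → p r = Pi.single l 1 := by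
    intro r
    by_cases h : r ≠ r0 ∧ r ≠ r1
    · obtain ⟨l, hl⟩ := aux_sum_one _ (hd r h.1 h.2)
      exact ⟨l, fun _ _ => hl⟩
    · exact ⟨j, fun a b => absurd ⟨a, b⟩ h⟩
  choose g hg using hg
  have hi : ∃ i, i ∉ ((Finset.univ.erase r0).erase r1).image g := by
    by_contra! hc
    have h1 : (Finset.univ : Finset (Fin n)) ⊆ ((Finset.univ.erase r0).erase r1).image g :=
      fun i _ => hc i
    have h2 := (Finset.card_le_card h1).trans Finset.card_image_le
    rw [Finset.card_erase_of_mem (by simp [hr10]), Finset.card_erase_of_mem (by simp)] at h2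
    simp at h2
    have := j.pos
    omega
  obtain ⟨i, hi⟩ := hi
  have hi' : ∀ r, r ≠ r0 → r ≠ r1 → g r ≠ i := by
    intro r h h' h''
    exact hi (Finset.mem_image.2 ⟨r, by simp [h, h'], h''⟩)
  let t : Fin (n+1) → Fin (n+1) := fun r =>
    if r = r0 then Fin.last n else if r = r1 then i.castSucc else (g r).castSucc
  have ht : Function.Injective t := by
    intro a b hab
    have gi : a ≠ r0 → a ≠ r1 → b ≠ r0 → b ≠ r1 → g a = g b → a = b := by
      intro h1 h2 h3 h4 h5
      apply hinj
      rw [hg a h1 h2, hg b h3 h4, h5]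
    have ha := hi' a
    have hb := hi' b
    have l1 : ∀ x : Fin n, x.castSucc ≠ Fin.last n := fun x => Fin.castSucc_ne_last x
    simp only [t] at hab
    have cs : ∀ x y : Fin n, x.castSucc = y.castSucc → x = y :=
      fun x y h => Fin.castSucc_injective n h
    split_ifs at hab with h1 h2 h3 h4 h5 h6 h7
    all_goals first
      | (exfalso; exact l1 _ hab)
      | (exfalso; exact l1 _ hab.symm)
      | grind
  refine ⟨Equiv.ofBijective t (Finite.injective_iff_bijective.1 ht), i, j, k, fun r => ?_⟩
  simp only [Equiv.ofBijective_apply, t]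
  by_cases h : r = r0
  · left; simp [h, hr0]
  by_cases h' : r = r1
  · right; left; simp [h', hr10, hjk]
  · right; right; exact ⟨g r, hi' r h h', by simp [h, h'], hg r h h'⟩

lemma Dmat_mem (n : ℕ) (p : Fin (n+1) → Fin n → ℕ) (hsum : ∑ r, ∑ i, p r i = n + 1) :
    (Dmat n p).det ∈ Submodule.span ℝ
      (Set.range fun p : Fin n × Fin n × Fin n => Xpoly n p.1 p.2.1 p.2.2) := by
  by_cases hinj : Function.Injective p
  · obtain ⟨τ, i, j, k, h⟩ := core n p hinj hsum
    have hM : Dmat n p = (Xmat n i j k).submatrix τ id := by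
      ext1 r c
      simp only [Dmat, Xmat, Matrix.of_apply, Matrix.submatrix_apply, id]
      have := i.isLt
      rcases h r with ⟨h1, h2⟩ | ⟨h1, h2⟩ | ⟨l, h0, h1, h2⟩
      · have : n ≠ i := by omega
        simp [h1, h2, this]
      · simp only [h1, h2, Pi.add_apply, pow_add, Finset.prod_mul_distrib, prod_single]
        simp
      · have : (l : ℕ) ≠ i := fun h => h0 (Fin.ext h)
        simp only [h1, h2, prod_single]
        simp [this]
    rw [hM, Matrix.det_permute, ← Xpoly]
    have hX : Xpoly n i j k ∈ Submodule.span ℝ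
      (Set.range fun p : Fin n × Fin n × Fin n => Xpoly n p.1 p.2.1 p.2.2) :=
      Submodule.subset_span ⟨(i, j, k), rfl⟩
    rcases Int.units_eq_one_or (Equiv.Perm.sign τ) with h | h <;> rw [h]
    · simpa using hX
    · simpa using hX
  · simp only [Function.Injective, not_forall] at hinj
    obtain ⟨a, b, hab, hne⟩ := hinj
    rw [Matrix.det_zero_of_row_eq hne]
    · exact Submodule.zero_mem _
    · funext c
      simp [Dmat, hab]

lemma alt_monomial (n : ℕ) (m : (Fin n × Fin (n+1)) →₀ ℕ) (a : ℝ) :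
    ∑ σ : Equiv.Perm (Fin (n+1)), ((Equiv.Perm.sign σ : ℤ) : ℝ) •
      permAct n σ (MvPolynomial.monomial m a) = a • (Dmat n (fun r i => m (i, r))).det := by
  rw [← Matrix.det_transpose, Matrix.det_apply', Finset.smul_sum]
  refine Finset.sum_congr rfl fun σ _ => ?_
  have : permAct n σ (MvPolynomial.monomial m a) =
      a • ∏ r, (Dmat n (fun r i => m (i, r))) r (σ r) := by
    rw [MvPolynomial.monomial_eq, Finsupp.prod_fintype _ _ (by simp), MvPolynomial.smul_eq_C_mul]
    rw [map_mul, map_prod, Fintype.prod_prod_type_right]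
    simp [permAct, Dmat]
  rw [this, MvPolynomial.smul_eq_C_mul, MvPolynomial.smul_eq_C_mul, MvPolynomial.smul_eq_C_mul]
  simp only [Matrix.transpose_apply, map_intCast]
  ring

/-- Every polynomial in the variables `x_i^j`, homogeneous of degree `n+1` and skew-symmetric
under the permutations of the superscripts, is a real linear combination of the `X_{i,jk}`. -/
theorem skewSymmetric_mem_span_Xpoly (n : ℕ) (hn : 1 ≤ n)
    (f : MvPolynomial (Fin n × Fin (n+1)) ℝ)
    (hhom : f.IsHomogeneous (n + 1))
    (hskew : ∀ σ : Equiv.Perm (Fin (n+1)),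
      permAct n σ f = ((Equiv.Perm.sign σ : ℤ) : ℝ) • f) :
    f ∈ Submodule.span ℝ
      (Set.range fun p : Fin n × Fin n × Fin n => Xpoly n p.1 p.2.1 p.2.2) := by
  have h1 : ∑ σ : Equiv.Perm (Fin (n+1)), ((Equiv.Perm.sign σ : ℤ) : ℝ) • permAct n σ f
      = ((n+1).factorial : ℝ) • f := by
    have : ∀ σ : Equiv.Perm (Fin (n+1)),
        ((Equiv.Perm.sign σ : ℤ) : ℝ) • permAct n σ f = f := by
      intro σ
      rw [hskew, smul_smul]
      rcases Int.units_eq_one_or (Equiv.Perm.sign σ) with h | h <;> rw [h] <;> simp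
    simp only [this, Finset.sum_const, Finset.card_univ, Fintype.card_perm, Fintype.card_fin]
    rw [Nat.cast_smul_eq_nsmul]
  have h2 : ∑ σ : Equiv.Perm (Fin (n+1)), ((Equiv.Perm.sign σ : ℤ) : ℝ) • permAct n σ f
      = ∑ m ∈ f.support, f.coeff m • (Dmat n (fun r i => m (i, r))).det := by
    simp only [← alt_monomial]
    rw [Finset.sum_comm]
    refine Finset.sum_congr rfl fun σ _ => ?_
    rw [← Finset.smul_sum, ← map_sum, MvPolynomial.support_sum_monomial_coeff]
  rw [← Submodule.smul_mem_iff _ (show ((n+1).factorial : ℝ) ≠ 0 by positivity), ← h1, h2]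
  refine Submodule.sum_mem _ fun m hm => Submodule.smul_mem _ _ (Dmat_mem n _ ?_)
  have := hhom (MvPolynomial.mem_support_iff.1 hm)
  rw [Finsupp.weight_apply, Finsupp.sum_fintype _ _ (by simp),
    Fintype.sum_prod_type_right] at this
  simpa using this
end

section
/- Let m be a monomial of total degree n+1 in the variables x_i^j. If some superscript value j₀ ∈ {0,…,n} occurs in m with total multiplicity at least 3, then Skew(m) = 0. -/
/-- Skew-symmetrization over the superscripts: `Skew(f) = Σ_σ sgn(σ) · σ·f`. -/
noncomputable def skew (n : ℕ) (f : MvPolynomial (Fin n × Fin (n+1)) ℝ) :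
    MvPolynomial (Fin n × Fin (n+1)) ℝ :=
  ∑ σ : Equiv.Perm (Fin (n+1)), (Equiv.Perm.sign σ : ℤ) • permAct n σ f

/-- If a monomial of total degree `n+1` has some superscript value occurring with total
multiplicity at least `3`, then its skew-symmetrization vanishes. -/
theorem skew_monomial_eq_zero_of_mult_ge_three (n : ℕ) (hn : 1 ≤ n)
    (d : (Fin n × Fin (n+1)) →₀ ℕ) (hdeg : (d.sum fun _ e => e) = n + 1)
    (j₀ : Fin (n+1)) (hj₀ : 3 ≤ ∑ i : Fin n, d (i, j₀)) :
    skew n (MvPolynomial.monomial d (1 : ℝ)) = 0 := by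
  classical
  have hsum : ∑ j : Fin (n+1), ∑ i : Fin n, d (i, j) = n + 1 := by
    rw [Finsupp.sum_fintype _ _ (fun _ => rfl), Fintype.sum_prod_type_right] at hdeg
    exact hdeg
  obtain ⟨a, ha, b, hb, hab⟩ : ∃ a, (∑ i : Fin n, d (i, a)) = 0 ∧
      ∃ b, (∑ i : Fin n, d (i, b)) = 0 ∧ a ≠ b := by
    have hZ : 1 < (Finset.univ.filter
        (fun j : Fin (n+1) => (∑ i : Fin n, d (i, j)) = 0)).card := by
      have key : ∑ j : Fin (n+1), (1 + if j = j₀ then 2 else 0) ≤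
          ∑ j : Fin (n+1), ((∑ i : Fin n, d (i, j)) +
            if (∑ i : Fin n, d (i, j)) = 0 then 1 else 0) := by
        apply Finset.sum_le_sum
        intro j _
        by_cases h : j = j₀
        · subst h
          simp only [if_true]
          omega
        · simp only [h, if_false]
          split_ifs <;> omega
      rw [Finset.sum_add_distrib, Finset.sum_add_distrib, hsum, ← Finset.card_filter] at key
      simp only [Finset.sum_const, Finset.card_univ, Fintype.card_fin, Finset.sum_ite_eq',
        Finset.mem_univ, if_true, smul_eq_mul] at key
      omega
    obtain ⟨a, ha, b, hb, hab⟩ := Finset.one_lt_card.mp hZ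
    exact ⟨a, (Finset.mem_filter.mp ha).2, b, (Finset.mem_filter.mp hb).2, hab⟩
  have ha' : ∀ i, d (i, a) = 0 := fun i => Finset.sum_eq_zero_iff.mp ha i (Finset.mem_univ i)
  have hb' : ∀ i, d (i, b) = 0 := fun i => Finset.sum_eq_zero_iff.mp hb i (Finset.mem_univ i)
  have hfix : ∀ σ : Equiv.Perm (Fin (n+1)),
      permAct n (σ * Equiv.swap a b) (MvPolynomial.monomial d (1 : ℝ)) =
      permAct n σ (MvPolynomial.monomial d (1 : ℝ)) := by
    intro σ
    change MvPolynomial.rename _ _ = MvPolynomial.rename _ _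
    rw [MvPolynomial.rename_monomial, MvPolynomial.rename_monomial]
    congr 2
    unfold Finsupp.mapDomain
    apply Finsupp.sum_congr
    rintro ⟨i, j⟩ hx
    have hx' := Finsupp.mem_support_iff.mp hx
    have h1 : j ≠ a := by rintro rfl; exact hx' (ha' i)
    have h2 : j ≠ b := by rintro rfl; exact hx' (hb' i)
    simp [Equiv.swap_apply_of_ne_of_ne h1 h2]
  unfold skew
  refine Finset.sum_involution (fun σ _ => σ * Equiv.swap a b) ?_ ?_ ?_ ?_
  · intro σ _
    rw [hfix, Equiv.Perm.sign_mul, Equiv.Perm.sign_swap hab]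
    simp
  · intro σ _ _ h
    exact hab (Equiv.swap_eq_one_iff.mp (mul_eq_left.mp h))
  · intro σ _
    exact Finset.mem_univ _
  · intro σ _
    simp [mul_assoc]
end

section
/- Let m be a monomial of total degree n+1 in the variables x_i^j in which every superscript value j ∈ {0,…,n} occurs with total multiplicity exactly 1. Then Skew(m) = 0. -/
/-- If in a monomial of total degree `n+1` every superscript value occurs with total
multiplicity exactly `1`, then its skew-symmetrization vanishes. -/
theorem skew_monomial_eq_zero_of_all_mult_one (n : ℕ) (hn : 1 ≤ n)
    (d : (Fin n × Fin (n+1)) →₀ ℕ) (hdeg : (d.sum fun _ e => e) = n + 1)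
    (hmult : ∀ j : Fin (n+1), ∑ i : Fin n, d (i, j) = 1) :
    skew n (MvPolynomial.monomial d (1 : ℝ)) = 0 := by
  have hex : ∀ j : Fin (n+1), ∃ c : Fin n, ∀ i, d (i, j) = if i = c then 1 else 0 := by
    intro j
    obtain ⟨c, -, hc⟩ : ∃ c ∈ Finset.univ, d (c, j) ≠ 0 := by
      apply Finset.exists_ne_zero_of_sum_ne_zero
      rw [hmult j]
      exact one_ne_zero
    refine ⟨c, fun i => ?_⟩
    have h := hmult j
    rw [← Finset.add_sum_erase _ _ (Finset.mem_univ c)] at h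
    split_ifs with hi
    · subst hi
      omega
    · have h2 : ∑ x ∈ Finset.univ.erase c, d (x, j) = 0 := by omega
      rw [Finset.sum_eq_zero_iff] at h2
      exact h2 i (by simp [hi])
  choose c hc using hex
  obtain ⟨j, k, hjk, hcjk⟩ := Fintype.exists_ne_map_eq_of_card_lt c (by simp)
  have hcs : ∀ l, c (Equiv.swap j k l) = c l := by
    intro l
    rw [Equiv.swap_apply_def]
    split_ifs with h1 h2
    · rw [h1, hcjk]
    · rw [h2, hcjk]
    · rfl
  have hfix : permAct n (Equiv.swap j k) (MvPolynomial.monomial d (1 : ℝ))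
      = MvPolynomial.monomial d (1 : ℝ) := by
    simp only [permAct, AlgHom.toRingHom_eq_coe, RingHom.coe_coe, MvPolynomial.rename_monomial]
    congr 2
    ext ⟨i, l⟩
    rw [← Finsupp.equivMapDomain_eq_mapDomain, Finsupp.equivMapDomain_apply]
    simp [hc, hcs]
  have hmul : ∀ σ : Equiv.Perm (Fin (n+1)), ∀ f,
      permAct n (σ * Equiv.swap j k) f = permAct n σ (permAct n (Equiv.swap j k) f) := by
    intro σ f
    simp only [permAct, AlgHom.toRingHom_eq_coe, RingHom.coe_coe, MvPolynomial.rename_rename]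
    rfl
  unfold skew
  refine Finset.sum_involution (fun σ _ => σ * Equiv.swap j k) ?_ ?_ ?_ ?_
  · intro σ _
    rw [hmul, hfix]
    simp [Equiv.Perm.sign_swap hjk]
  · intro σ _ _ h
    exact hjk (Equiv.swap_eq_one_iff.mp (mul_eq_left.mp h))
  · intro σ _
    exact Finset.mem_univ _
  · intro σ _
    simp [mul_assoc]
end

section
/- For any points O, W_0, W_1, …, W_n ∈ ℝⁿ and any indices 1 ≤ i, j, k ≤ n, one has X_{i,jk}(W_0, …, W_n) = Σ_{m=0}^{n} X_{i,jk}(W_0, …, W_{m−1}, O, W_{m+1}, …, W_n), where the m-th summand is the evaluation of X_{i,jk} at the tuple obtained from (W_0, …, W_n) by replacing the m-th point W_m with O. -/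
/-- Archimedes-type additivity of the basic determinants: replacing, in turn, each vertex
`W m` by the point `O` and summing recovers `X_{i,jk}(W_0, …, W_n)`. -/
theorem Xpoly_eval_eq_sum_update (n : ℕ) (hn : 1 ≤ n)
    (O : EuclideanSpace ℝ (Fin n)) (W : Fin (n+1) → EuclideanSpace ℝ (Fin n))
    (i j k : Fin n) :
    MvPolynomial.eval (fun v => W v.2 v.1) (Xpoly n i j k) =
      ∑ m : Fin (n+1),
        MvPolynomial.eval (fun v => Function.update W m O v.2 v.1) (Xpoly n i j k) := by
  let f : EuclideanSpace ℝ (Fin n) → Fin (n+1) → ℝ := fun P r =>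
    if (r : ℕ) = (i : ℕ) then P j * P k
    else if h : (r : ℕ) < n then P ⟨r, h⟩ else 1
  have key : ∀ U : Fin (n+1) → EuclideanSpace ℝ (Fin n),
      MvPolynomial.eval (fun v => U v.2 v.1) (Xpoly n i j k) =
        (Matrix.of fun r c => f (U c) r).det := by
    intro U
    rw [Xpoly, RingHom.map_det]
    congr 1
    ext r c
    simp only [Xmat, RingHom.mapMatrix_apply, Matrix.map_apply, Matrix.of_apply, f]
    split_ifs <;> simp
  have hlast : ∀ P, f P (Fin.last n) = 1 := by
    intro P
    have : n ≠ (i : ℕ) := by omega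
    simp [f, this]
  rw [key W]
  have h := congrFun (Matrix.mulVec_cramer (Matrix.of fun r c => f (W c) r) (f O)) (Fin.last n)
  simp only [Matrix.mulVec, dotProduct, Matrix.of_apply, hlast, one_mul, Pi.smul_apply,
    smul_eq_mul, mul_one] at h
  rw [← h]
  refine Finset.sum_congr rfl fun m _ => ?_
  rw [key, Matrix.cramer_apply]
  congr 1
  ext r c
  by_cases hc : c = m
  · subst hc; simp
  · simp [hc]
end

section
/- Let σ be a transposition of {1, …, n}, acting on polynomials in the variables x_i^j by the substitution x_i^j ↦ x_{σ(i)}^j. Then for all 1 ≤ i, j, k ≤ n, one has σ(X_{i,jk}) = −X_{σ(i),σ(j)σ(k)}. -/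
/-- For a transposition `σ` of the subscripts (coordinate indices), one has
`σ(X_{i,jk}) = − X_{σ(i),σ(j)σ(k)}`. -/
theorem rename_swap_Xpoly (n : ℕ) (hn : 1 ≤ n)
    (σ : Equiv.Perm (Fin n)) (hσ : σ.IsSwap) (i j k : Fin n) :
    MvPolynomial.rename (σ.prodCongr (Equiv.refl (Fin (n+1)))) (Xpoly n i j k) =
      - Xpoly n (σ i) (σ j) (σ k) := by
  obtain ⟨a, b, hab, rfl⟩ := hσ
  have hne : a.castSucc ≠ b.castSucc := fun h => hab (Fin.castSucc_injective n h)
  have h1 : ∀ r : Fin n, Equiv.swap a.castSucc b.castSucc r.castSucc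
      = (Equiv.swap a b r).castSucc := fun r =>
    ((Fin.castSucc_injective n).map_swap a b r).symm
  have h2 : Equiv.swap a.castSucc b.castSucc (Fin.last n) = Fin.last n :=
    Equiv.swap_apply_of_ne_of_ne (Fin.castSucc_lt_last a).ne' (Fin.castSucc_lt_last b).ne'
  have key : (Xmat n i j k).map (MvPolynomial.rename
        ((Equiv.swap a b).prodCongr (Equiv.refl (Fin (n+1)))))
      = (Xmat n (Equiv.swap a b i) (Equiv.swap a b j) (Equiv.swap a b k)).submatrix
          (Equiv.swap a.castSucc b.castSucc) id := by
    ext1 r c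
    induction r using Fin.lastCases with
    | last =>
      have e1 : n ≠ (i : ℕ) := i.isLt.ne'
      have e2 : n ≠ (Equiv.swap a b i : ℕ) := (Equiv.swap a b i).isLt.ne'
      simp [Xmat, h2, e1, e2]
    | cast r =>
      simp only [Matrix.map_apply, Matrix.submatrix_apply, h1, Xmat, Matrix.of_apply,
        Fin.val_castSucc, ← Fin.ext_iff, EmbeddingLike.apply_eq_iff_eq, Fin.is_lt, dite_true, id]
      split_ifs <;> simp
  unfold Xpoly
  rw [AlgHom.map_det, AlgHom.mapMatrix_apply, key, Matrix.det_permute, Equiv.Perm.sign_swap hne]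
  simp
end

section
/- For every r ∈ {1, …, n}, let ξ_r denote the derivation ξ_r := Σ_{m=0}^{n} ∂/∂x_r^m on the polynomial ring in the variables x_i^j. Then for all 1 ≤ i, j, k ≤ n, one has ξ_r(X_{i,jk}) = (δ_{ij}·δ_{rk} + δ_{ik}·δ_{rj})·V, where δ is the Kronecker delta. -/
/-- The Kronecker delta. -/
def kron {n : ℕ} (a b : Fin n) : ℝ := if a = b then 1 else 0

theorem deriv_prod_aux {A ι : Type*} [CommRing A] [Algebra ℝ A] [DecidableEq ι]
    (D : Derivation ℝ A A) (s : Finset ι) (f : ι → A) :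
    D (∏ a ∈ s, f a) = ∑ b ∈ s, ∏ a ∈ s, (if a = b then D (f a) else f a) := by
  induction s using Finset.induction_on with
  | empty => simp
  | insert c s hc ih =>
    rw [Finset.prod_insert hc, Finset.sum_insert hc, Finset.prod_insert hc, D.leibniz, ih]
    have h1 : ∏ a ∈ s, (if a = c then D (f a) else f a) = ∏ a ∈ s, f a :=
      Finset.prod_congr rfl fun a ha => if_neg (fun h : a = c => hc (h ▸ ha))
    have h2 : ∑ b ∈ s, ∏ a ∈ insert c s, (if a = b then D (f a) else f a)
        = f c * ∑ b ∈ s, ∏ a ∈ s, (if a = b then D (f a) else f a) := by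
      rw [Finset.mul_sum]
      refine Finset.sum_congr rfl fun b hb => ?_
      rw [Finset.prod_insert hc, if_neg (fun h : c = b => hc (h ▸ hb))]
    rw [h1, h2]
    simp only [smul_eq_mul, if_true]
    ring

theorem deriv_det_aux {A ι : Type*} [CommRing A] [Algebra ℝ A] [DecidableEq ι] [Fintype ι]
    (D : Derivation ℝ A A) (M : Matrix ι ι A) :
    D M.det = ∑ b, (M.updateRow b (fun c => D (M b c))).det := by
  rw [← Matrix.det_transpose, Matrix.det_apply, map_sum]
  have h : ∀ b, (M.updateRow b (fun c => D (M b c))).det =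
      ∑ σ : Equiv.Perm ι, Equiv.Perm.sign σ •
        ∏ a, (if a = b then D (M a (σ a)) else M a (σ a)) := by
    intro b
    rw [← Matrix.det_transpose, Matrix.det_apply]
    refine Finset.sum_congr rfl fun σ _ => ?_
    congr 1
    refine Finset.prod_congr rfl fun a _ => ?_
    by_cases hab : a = b
    · subst hab; simp
    · simp [hab]
  simp only [h]
  rw [Finset.sum_comm]
  refine Finset.sum_congr rfl fun σ _ => ?_
  rw [← Finset.smul_sum, Units.smul_def, Units.smul_def, map_zsmul, deriv_prod_aux]
  rfl

theorem det_row_aux (n : ℕ) (i j k l : Fin n) :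
    ((Xmat n i j k).updateRow i.castSucc (fun c => MvPolynomial.X (l, c))).det
      = kron i l • Vpoly n := by
  by_cases h : i = l
  · subst h
    simp only [kron, if_true, one_smul, Vpoly]
    congr 1
    ext1 a c
    by_cases ha : a = i.castSucc
    · subst ha; simp [Vmat]
    · have : (a : ℕ) ≠ i := fun h => ha (Fin.ext h)
      simp [Vmat, Xmat, ha, this]
  · simp only [kron, h, if_false, zero_smul]
    have hne : l.castSucc ≠ i.castSucc := fun h' => h (Fin.castSucc_injective _ h').symm
    have hv : (l : ℕ) ≠ i := fun h' => h (Fin.ext h').symm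
    apply Matrix.det_zero_of_row_eq hne
    ext1 c
    simp [hne, Xmat, hv]

/-- The infinitesimal translation `ξ_r = Σ_m ∂/∂x_r^m` sends `X_{i,jk}` to
`(δ_{ij} δ_{rk} + δ_{ik} δ_{rj}) · V`. -/
theorem xi_Xpoly (n : ℕ) (hn : 1 ≤ n) (r i j k : Fin n) :
    ∑ m : Fin (n+1), MvPolynomial.pderiv (r, m) (Xpoly n i j k) =
      (kron i j * kron r k + kron i k * kron r j) • Vpoly n := by
  obtain ⟨D, hD⟩ : ∃ D : Derivation ℝ (MvPolynomial (Fin n × Fin (n+1)) ℝ)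
      (MvPolynomial (Fin n × Fin (n+1)) ℝ),
      ∀ p, D p = ∑ m : Fin (n+1), MvPolynomial.pderiv (r, m) p := by
    refine ⟨∑ m : Fin (n+1), MvPolynomial.pderiv (r, m), fun p => ?_⟩
    have := map_sum (Derivation.coeFnAddMonoidHom (R := ℝ)
      (A := MvPolynomial (Fin n × Fin (n+1)) ℝ) (M := MvPolynomial (Fin n × Fin (n+1)) ℝ))
      (fun m : Fin (n+1) => MvPolynomial.pderiv (r, m)) Finset.univ
    have h2 := congrFun this p
    rw [Finset.sum_apply] at h2
    exact h2
  have hX : ∀ (a : Fin n) (c : Fin (n+1)), D (MvPolynomial.X (a, c)) = if r = a then 1 else 0 := by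
    intro a c
    rw [hD]
    simp only [MvPolynomial.pderiv_X, Pi.single_apply, Prod.mk.injEq]
    by_cases h : r = a
    · simp [h]
    · simp [h, Ne.symm h]
  rw [← hD, Xpoly, deriv_det_aux, Finset.sum_eq_single i.castSucc]
  · have hrow : (fun c => D (Xmat n i j k i.castSucc c)) =
        (MvPolynomial.C (kron r k) : MvPolynomial (Fin n × Fin (n+1)) ℝ) •
          (fun c => MvPolynomial.X (j, c) : Fin (n+1) → MvPolynomial (Fin n × Fin (n+1)) ℝ) +
        (MvPolynomial.C (kron r j) : MvPolynomial (Fin n × Fin (n+1)) ℝ) •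
          (fun c => MvPolynomial.X (k, c) : Fin (n+1) → MvPolynomial (Fin n × Fin (n+1)) ℝ) := by
      ext1 c
      simp only [Xmat, Matrix.of_apply, Fin.val_castSucc, if_true, D.leibniz, hX, kron,
        smul_eq_mul, Pi.add_apply, Pi.smul_apply]
      split_ifs <;> simp [add_comm]
    rw [hrow, Matrix.det_updateRow_add, Matrix.det_updateRow_smul, Matrix.det_updateRow_smul,
      det_row_aux, det_row_aux, ← MvPolynomial.smul_eq_C_mul, ← MvPolynomial.smul_eq_C_mul,
      smul_smul, smul_smul, ← add_smul, mul_comm (kron i j), mul_comm (kron i k)]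
  · intro b _ hb
    have hbi : (b : ℕ) ≠ i := fun h => hb (Fin.ext h)
    by_cases hbr : b = r.castSucc
    · subst hbr
      have hl : Fin.last n ≠ r.castSucc := (Fin.castSucc_lt_last r).ne'
      have hni : n ≠ (i : ℕ) := i.isLt.ne'
      apply Matrix.det_zero_of_row_eq hl
      ext1 c
      have hri : (r : ℕ) ≠ i := hbi
      simp [hl, Xmat, hri, hni, hX]
    · apply Matrix.det_eq_zero_of_row_eq_zero b
      intro c
      simp only [Matrix.updateRow_self, Xmat, Matrix.of_apply, if_neg hbi]
      split_ifs with h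
      · rw [hX, if_neg]
        rintro rfl
        exact hbr rfl
      · simp
  · simp
end

section
/- For p, q ∈ {1, …, n}, let η_{pq} denote the derivation η_{pq} := Σ_{m=0}^{n} (x_p^m·∂/∂x_q^m − x_q^m·∂/∂x_p^m) on the polynomial ring in the variables x_i^j. Then for all 1 ≤ i, j, k ≤ n, one has η_{pq}(X_{i,jk}) = δ_{qj}·X_{i,pk} + δ_{qk}·X_{i,pj} − δ_{pi}·X_{q,jk} − δ_{pj}·X_{i,qk} − δ_{pk}·X_{i,qj} + δ_{qi}·X_{p,jk}, where δ is the Kronecker delta. -/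
open MvPolynomial in
theorem aux_prod {σ ι : Type*} [DecidableEq ι] (D : Derivation ℝ (MvPolynomial σ ℝ) (MvPolynomial σ ℝ))
    (s : Finset ι) (f : ι → MvPolynomial σ ℝ) :
    D (∏ a ∈ s, f a) = ∑ b ∈ s, ∏ a ∈ s, (if a = b then D (f a) else f a) := by
  induction s using Finset.induction_on with
  | empty => simp
  | insert x s hx ih =>
    rw [Finset.prod_insert hx, D.leibniz, ih, Finset.sum_insert hx, Finset.prod_insert hx, if_pos rfl,
      add_comm, smul_eq_mul, smul_eq_mul, Finset.mul_sum]
    congr 1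
    · rw [mul_comm]
      congr 1
      refine Finset.prod_congr rfl fun a ha => ?_
      rw [if_neg (fun h : a = x => hx (h ▸ ha))]
    · refine Finset.sum_congr rfl fun b hb => ?_
      rw [Finset.prod_insert hx, if_neg (fun h : x = b => hx (h ▸ hb))]

theorem aux_det {σ ι : Type*} [Fintype ι] [DecidableEq ι]
    (D : Derivation ℝ (MvPolynomial σ ℝ) (MvPolynomial σ ℝ))
    (M : Matrix ι ι (MvPolynomial σ ℝ)) :
    D M.det = ∑ r, (M.updateRow r (fun c => D (M r c))).det := by
  simp only [Matrix.det_apply]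
  rw [map_sum, Finset.sum_comm]
  refine Finset.sum_congr rfl fun τ _ => ?_
  rw [← Finset.smul_sum, ← Equiv.sum_comp τ, Units.smul_def, Units.smul_def, map_zsmul, aux_prod]
  congr 1
  refine Finset.sum_congr rfl fun b _ => Finset.prod_congr rfl fun a _ => ?_
  rw [Matrix.updateRow_apply]
  by_cases h : a = b
  · subst h; simp
  · simp [h]

/-- The derivation. -/
noncomputable def etaD (n : ℕ) (p q : Fin n) :
    Derivation ℝ (MvPolynomial (Fin n × Fin (n+1)) ℝ) (MvPolynomial (Fin n × Fin (n+1)) ℝ) :=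
  ∑ m : Fin (n+1), ((MvPolynomial.X (p, m) : MvPolynomial (Fin n × Fin (n+1)) ℝ) • MvPolynomial.pderiv (q, m)
    - (MvPolynomial.X (q, m) : MvPolynomial (Fin n × Fin (n+1)) ℝ) • MvPolynomial.pderiv (p, m))

theorem etaD_apply (n : ℕ) (p q : Fin n) (f : MvPolynomial (Fin n × Fin (n+1)) ℝ) :
    etaD n p q f = ∑ m : Fin (n+1),
        (MvPolynomial.X (p, m) * MvPolynomial.pderiv (q, m) f
          - MvPolynomial.X (q, m) * MvPolynomial.pderiv (p, m) f) := by
  rw [etaD, ← Derivation.coeFnAddMonoidHom_apply, map_sum, Finset.sum_apply]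
  rfl

theorem etaD_X (n : ℕ) (p q a : Fin n) (c : Fin (n+1)) :
    etaD n p q (MvPolynomial.X (a, c)) =
      kron q a • MvPolynomial.X (p, c) - kron p a • MvPolynomial.X (q, c) := by
  rw [etaD_apply, Finset.sum_eq_single c]
  · simp only [MvPolynomial.pderiv_X, Pi.single_apply, Prod.mk.injEq, and_true, kron, eq_comm (a := a)]
    split_ifs <;> simp
  · intro m _ hm
    simp [MvPolynomial.pderiv_X, Pi.single_apply, hm.symm]
  · simp

/-- row replaced -/
noncomputable def Udet (n : ℕ) (i j k : Fin n) (r : Fin (n+1))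
    (v : Fin (n+1) → MvPolynomial (Fin n × Fin (n+1)) ℝ) : MvPolynomial (Fin n × Fin (n+1)) ℝ :=
  ((Xmat n i j k).updateRow r v).det

theorem Udet_add (n : ℕ) (i j k : Fin n) (r : Fin (n+1))
    (u v : Fin (n+1) → MvPolynomial (Fin n × Fin (n+1)) ℝ) :
    Udet n i j k r (fun c => u c + v c) = Udet n i j k r u + Udet n i j k r v :=
  Matrix.det_updateRow_add _ _ _ _

theorem Udet_smul (n : ℕ) (i j k : Fin n) (r : Fin (n+1)) (a : ℝ)
    (u : Fin (n+1) → MvPolynomial (Fin n × Fin (n+1)) ℝ) :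
    Udet n i j k r (fun c => a • u c) = a • Udet n i j k r u := by
  have := Matrix.det_updateRow_smul (Xmat n i j k) r (MvPolynomial.C a) u
  rw [MvPolynomial.smul_eq_C_mul, Udet, Udet, ← this]
  congr 2
  funext c
  simp [MvPolynomial.smul_eq_C_mul]

theorem Udet_sub (n : ℕ) (i j k : Fin n) (r : Fin (n+1))
    (u v : Fin (n+1) → MvPolynomial (Fin n × Fin (n+1)) ℝ) :
    Udet n i j k r (fun c => u c - v c) = Udet n i j k r u - Udet n i j k r v := by
  rw [eq_sub_iff_add_eq, ← Udet_add]
  simp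

theorem Udet_self (n : ℕ) (i j k a b : Fin n) :
    Udet n i j k i.castSucc (fun c => MvPolynomial.X (a, c) * MvPolynomial.X (b, c)) = Xpoly n i a b := by
  rw [Udet, Xpoly]
  congr 1
  ext1 r c
  rw [Matrix.updateRow_apply]
  by_cases h : r = i.castSucc
  · subst h; simp [Xmat]
  · have : (r : ℕ) ≠ i := fun h' => h (Fin.ext h')
    simp [Xmat, h, this]

theorem Xmat_row (n : ℕ) (i j k r : Fin n) (h : r ≠ i) (c : Fin (n+1)) :
    Xmat n i j k r.castSucc c = MvPolynomial.X (r, c) := by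
  have : (r : ℕ) ≠ i := fun h' => h (Fin.ext h')
  simp [Xmat, this]

theorem Udet_ne (n : ℕ) (i j k r s : Fin n) (h : r ≠ i) :
    Udet n i j k r.castSucc (fun c => MvPolynomial.X (s, c)) =
      if s = r then Xpoly n i j k else if s = i then - Xpoly n r j k else 0 := by
  have hc : r.castSucc ≠ i.castSucc := fun h' => h (Fin.castSucc_injective _ h')
  split_ifs with h1 h2
  · subst h1
    rw [Udet, Xpoly]
    congr 1
    rw [show (fun c => (MvPolynomial.X (s, c) : MvPolynomial (Fin n × Fin (n+1)) ℝ))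
      = Xmat n i j k s.castSucc from funext fun c => (Xmat_row n i j k s h c).symm]
    exact Matrix.updateRow_eq_self _ _
  · subst h2
    have := Matrix.det_permute (Equiv.swap r.castSucc s.castSucc) (Xmat n r j k)
    rw [Equiv.Perm.sign_swap hc] at this
    rw [Udet, Xpoly]
    simp only [Units.val_neg, Units.val_one, Int.cast_neg, Int.cast_one, neg_mul, one_mul] at this
    rw [← this]
    congr 1
    ext1 a c
    rw [Matrix.updateRow_apply, Matrix.submatrix_apply]
    by_cases ha : a = r.castSucc
    · subst ha
      simp [Xmat_row n r j k s (Ne.symm h)]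
    · rw [if_neg ha]
      by_cases hb : a = s.castSucc
      · subst hb
        simp [Xmat]
      · rw [Equiv.swap_apply_of_ne_of_ne ha hb]
        have h3 : (a : ℕ) ≠ r := fun h' => ha (Fin.ext h')
        have h4 : (a : ℕ) ≠ s := fun h' => hb (Fin.ext h')
        simp [Xmat, h3, h4]
  · have hs : s.castSucc ≠ r.castSucc := fun h' => h1 (Fin.castSucc_injective _ h')
    refine Matrix.det_zero_of_row_eq hs.symm ?_
    rw [Matrix.updateRow_self, Matrix.updateRow_ne hs]
    exact funext fun c => (Xmat_row n i j k s h2 c).symm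

theorem Xpoly_comm (n : ℕ) (i j k : Fin n) : Xpoly n i j k = Xpoly n i k j := by
  simp only [Xpoly, Xmat, mul_comm]

theorem eta_row_self (n : ℕ) (p q i j k : Fin n) :
    Udet n i j k i.castSucc (fun c => etaD n p q (Xmat n i j k i.castSucc c)) =
      kron q j • Xpoly n i p k + kron q k • Xpoly n i p j
        - kron p j • Xpoly n i q k - kron p k • Xpoly n i q j := by
  have : (fun c => etaD n p q (Xmat n i j k i.castSucc c)) = fun c =>
      ((kron q j • (MvPolynomial.X (p, c) * MvPolynomial.X (k, c))
        + kron q k • (MvPolynomial.X (p, c) * MvPolynomial.X (j, c)))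
        - kron p j • (MvPolynomial.X (q, c) * MvPolynomial.X (k, c)))
        - kron p k • (MvPolynomial.X (q, c) * MvPolynomial.X (j, c)) := by
    funext c
    have : Xmat n i j k i.castSucc c = MvPolynomial.X (j, c) * MvPolynomial.X (k, c) := by
      simp [Xmat]
    rw [this, Derivation.leibniz, etaD_X, etaD_X]
    simp only [smul_eq_mul, MvPolynomial.smul_eq_C_mul]
    ring
  rw [this, Udet_sub, Udet_sub, Udet_add]
  simp only [Udet_smul, Udet_self]

theorem eta_row_ne (n : ℕ) (p q i j k r : Fin n) (h : r ≠ i) :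
    Udet n i j k r.castSucc (fun c => etaD n p q (Xmat n i j k r.castSucc c)) =
      kron q r • (if p = r then Xpoly n i j k else if p = i then - Xpoly n r j k else 0)
      - kron p r • (if q = r then Xpoly n i j k else if q = i then - Xpoly n r j k else 0) := by
  simp only [Xmat_row n i j k r h, etaD_X]
  rw [Udet_sub, Udet_smul, Udet_smul, Udet_ne _ _ _ _ _ _ h, Udet_ne _ _ _ _ _ _ h]

theorem eta_row_last (n : ℕ) (p q i j k : Fin n) :
    Udet n i j k (Fin.last n) (fun c => etaD n p q (Xmat n i j k (Fin.last n) c)) = 0 := by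
  refine Matrix.det_eq_zero_of_row_eq_zero (Fin.last n) fun c => ?_
  have : n ≠ (i : ℕ) := i.2.ne'
  simp [Xmat, this]

theorem eta_Xpoly (n : ℕ) (hn : 1 ≤ n) (p q i j k : Fin n) :
    ∑ m : Fin (n+1),
        (MvPolynomial.X (p, m) * MvPolynomial.pderiv (q, m) (Xpoly n i j k)
          - MvPolynomial.X (q, m) * MvPolynomial.pderiv (p, m) (Xpoly n i j k)) =
      kron q j • Xpoly n i p k + kron q k • Xpoly n i p j - kron p i • Xpoly n q j k
        - kron p j • Xpoly n i q k - kron p k • Xpoly n i q j + kron q i • Xpoly n p j k := by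
  rw [← etaD_apply]
  have h0 : etaD n p q (Xpoly n i j k) =
      ∑ r, Udet n i j k r (fun c => etaD n p q (Xmat n i j k r c)) := aux_det _ _
  rw [h0, Fin.sum_univ_castSucc, eta_row_last, add_zero,
    ← Finset.add_sum_erase _ _ (Finset.mem_univ i), eta_row_self,
    Finset.sum_congr rfl (fun r hr => eta_row_ne n p q i j k r (Finset.ne_of_mem_erase hr)),
    Finset.sum_sub_distrib]
  have key : ∀ p q : Fin n, ∑ r ∈ Finset.univ.erase i, kron q r •
      (if p = r then Xpoly n i j k else if p = i then - Xpoly n r j k else 0) =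
      if q = i then 0 else
      (if p = q then Xpoly n i j k else if p = i then - Xpoly n q j k else 0) := by
    intro p q
    simp only [kron, ite_smul, one_smul, zero_smul]
    rw [Finset.sum_ite_eq]
    by_cases h : q = i <;> simp [h]
  rw [key, key]
  have fin : (if q = i then 0 else
      (if p = q then Xpoly n i j k else if p = i then - Xpoly n q j k else 0)) -
      (if p = i then 0 else
      (if q = p then Xpoly n i j k else if q = i then - Xpoly n p j k else 0)) =
      kron q i • Xpoly n p j k - kron p i • Xpoly n q j k := by
    unfold kron
    by_cases h1 : p = q
    · subst h1; simp
    · by_cases h2 : q = i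
      · subst h2; simp [h1, Ne.symm h1]
      · by_cases h3 : p = i
        · subst h3; simp [h1, h2]
        · simp [h1, h2, h3, Ne.symm h1]
  rw [fin]
  abel
end

section
/- Suppose that for some transposition σ of {1, …, n}, applying to each y_ℓ the substitution x_i^j ↦ x_{σ(i)}^j yields −y_{σ(ℓ)}, for every ℓ ∈ {1, …, n}. Then the coefficients satisfy A_{i,jk}^ℓ = A_{σ(i),σ(j)σ(k)}^{σ(ℓ)} for all 1 ≤ i, j, k, ℓ ≤ n. -/
/-- `y_ℓ = Σ_{i,j,k} A_{i,jk}^ℓ X_{i,jk}`. -/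
noncomputable def ypoly (n : ℕ) (A : Fin n → Fin n → Fin n → Fin n → ℝ) (ℓ : Fin n) :
    MvPolynomial (Fin n × Fin (n+1)) ℝ :=
  ∑ i : Fin n, ∑ j : Fin n, ∑ k : Fin n, A ℓ i j k • Xpoly n i j k

open MvPolynomial in
lemma Xmat_castSucc (n : ℕ) (i j k r : Fin n) (c : Fin (n+1)) :
    Xmat n i j k r.castSucc c = if r = i then X (j, c) * X (k, c) else X (r, c) := by
  simp [Xmat, Fin.ext_iff]

lemma Xmat_last (n : ℕ) (i j k : Fin n) (c : Fin (n+1)) :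
    Xmat n i j k (Fin.last n) c = 1 := by
  have := i.isLt
  simp [Xmat, this.ne']

/-- extension of a permutation fixing the last index -/
def extPerm {n : ℕ} (σ : Equiv.Perm (Fin n)) : Equiv.Perm (Fin (n+1)) :=
  finSuccEquivLast.symm.permCongr (Equiv.optionCongr σ)

lemma extPerm_castSucc {n : ℕ} (σ : Equiv.Perm (Fin n)) (r : Fin n) :
    extPerm σ r.castSucc = (σ r).castSucc := by
  simp [extPerm, Equiv.permCongr_apply]

lemma extPerm_last {n : ℕ} (σ : Equiv.Perm (Fin n)) :
    extPerm σ (Fin.last n) = Fin.last n := by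
  simp [extPerm, Equiv.permCongr_apply]

lemma rename_Xpoly (n : ℕ) (σ : Equiv.Perm (Fin n)) (hσ : σ.IsSwap) (i j k : Fin n) :
    MvPolynomial.rename (σ.prodCongr (Equiv.refl (Fin (n+1)))) (Xpoly n i j k) =
      - Xpoly n (σ i) (σ j) (σ k) := by
  have hs : Equiv.Perm.sign (extPerm σ) = -1 := by
    rw [extPerm, Equiv.Perm.sign_permCongr, Equiv.optionCongr_sign, hσ.sign_eq]
  have h : (MvPolynomial.rename (R := ℝ) (σ.prodCongr (Equiv.refl (Fin (n+1))))).mapMatrix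
      (Xmat n i j k) = (Xmat n (σ i) (σ j) (σ k)).submatrix (extPerm σ) id := by
    ext1 r c
    induction r using Fin.lastCases with
    | last => simp [Xmat_last, extPerm_last]
    | cast r =>
      simp only [AlgHom.mapMatrix_apply, Matrix.map_apply, Matrix.submatrix_apply, id,
        extPerm_castSucc, Xmat_castSucc, EmbeddingLike.apply_eq_iff_eq]
      split_ifs <;> simp
  rw [Xpoly, AlgHom.map_det, h, Matrix.det_permute, hs]
  simp [Xpoly]

/-- exponent of row `r` -/
noncomputable def ex {n : ℕ} (i j k : Fin n) (r c : Fin (n+1)) : Fin n × Fin (n+1) →₀ ℕ :=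
  Fin.lastCases (motive := fun _ => Fin n × Fin (n+1) →₀ ℕ) 0
    (fun r => if r = i then Finsupp.single (j, c) 1 + Finsupp.single (k, c) 1
      else Finsupp.single (r, c) 1) r

lemma ex_last {n : ℕ} (i j k : Fin n) (c : Fin (n+1)) : ex i j k (Fin.last n) c = 0 := by
  simp [ex]

lemma ex_castSucc {n : ℕ} (i j k r : Fin n) (c : Fin (n+1)) : ex i j k r.castSucc c =
    if r = i then Finsupp.single (j, c) 1 + Finsupp.single (k, c) 1
      else Finsupp.single (r, c) 1 := by
  simp [ex]

lemma Xmat_eq (n : ℕ) (i j k : Fin n) (r c : Fin (n+1)) :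
    Xmat n i j k r c = MvPolynomial.monomial (ex i j k r c) 1 := by
  induction r using Fin.lastCases with
  | last => simp [Xmat_last, ex_last]
  | cast r =>
    rw [Xmat_castSucc, ex_castSucc]
    split_ifs
    · simp [MvPolynomial.X, MvPolynomial.monomial_mul]
    · simp [MvPolynomial.X]

lemma ex_off {n : ℕ} (i j k : Fin n) (r c c' : Fin (n+1)) (h : c' ≠ c) (a : Fin n) :
    ex i j k r c' (a, c) = 0 := by
  induction r using Fin.lastCases with
  | last => simp [ex_last]
  | cast r =>
    rw [ex_castSucc]
    split_ifs <;> simp [Finsupp.single_apply, h]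

lemma ex_sum_apply {n : ℕ} (i j k : Fin n) (τ : Fin (n+1) → Fin (n+1)) (a : Fin n)
    (c : Fin (n+1)) : (∑ c', ex i j k (τ c') c') (a, c) = ex i j k (τ c) c (a, c) := by
  rw [Finsupp.finsetSum_apply]
  exact Finset.sum_eq_single c (fun c' _ h => ex_off i j k _ c c' h a) (by simp)

lemma ex_deg {n : ℕ} (i j k : Fin n) (r c : Fin (n+1)) :
    ∑ a, ex i j k r c (a, c) =
      if r = i.castSucc then 2 else if r = Fin.last n then 0 else 1 := by
  induction r using Fin.lastCases with
  | last => simp [ex_last, (Fin.castSucc_lt_last i).ne']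
  | cast r =>
    rw [ex_castSucc]
    by_cases h : r = i
    · simp [h, Finsupp.single_apply, Finset.sum_add_distrib]
    · simp [h, Finsupp.single_apply, (Fin.castSucc_lt_last r).ne]

lemma ex_key {n : ℕ} (i j k i' j' k' : Fin n) (τ : Equiv.Perm (Fin (n+1))) :
    (∑ c, ex i' j' k' (τ c) c = ∑ c, ex i j k c c) ↔
      τ = 1 ∧ i' = i ∧ ((j' = j ∧ k' = k) ∨ (j' = k ∧ k' = j)) := by
  constructor
  · intro h
    have h1 : ∀ a c, ex i' j' k' (τ c) c (a, c) = ex i j k c c (a, c) := by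
      intro a c
      rw [← ex_sum_apply i' j' k' τ, h]
      exact ex_sum_apply i j k id a c
    have hd : ∀ c, (if τ c = i'.castSucc then 2 else if τ c = Fin.last n then 0 else 1) =
        (if c = i.castSucc then 2 else if c = Fin.last n then 0 else 1) := by
      intro c
      rw [← ex_deg i' j' k' (τ c) c, ← ex_deg i j k c c]
      exact Finset.sum_congr rfl fun a _ => h1 a c
    have hi : τ i.castSucc = i'.castSucc := by
      have := hd i.castSucc
      by_contra hne
      rw [if_neg hne, if_pos rfl] at this
      split_ifs at this <;> omega
    have hl : τ (Fin.last n) = Fin.last n := by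
      have := hd (Fin.last n)
      rw [if_neg (Fin.castSucc_lt_last i).ne', if_pos rfl] at this
      by_contra hne
      rw [if_neg hne] at this
      split_ifs at this
    have hr : ∀ r : Fin n, r ≠ i → τ r.castSucc = r.castSucc := by
      intro r hri
      have h2 := hd r.castSucc
      have h3 := fun a => h1 a r.castSucc
      generalize τ r.castSucc = s at h2 h3
      induction s using Fin.lastCases with
      | last =>
        simp [hri, (Fin.castSucc_lt_last _).ne, (Fin.castSucc_lt_last _).ne'] at h2
      | cast s =>
        have hs : s ≠ i' := by
          rintro rfl
          simp [hri, (Fin.castSucc_lt_last _).ne] at h2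
        have := h3 r
        simp only [ex_castSucc, if_neg hs, if_neg hri] at this
        by_contra hne
        have hne' : s ≠ r := fun h => hne (by rw [h])
        simp [Finsupp.single_apply, hne'] at this
    have hii : i' = i := by
      by_contra hne
      have h4 := hr i' hne
      have := τ.injective (h4.trans hi.symm)
      exact hne (Fin.castSucc_injective n this)
    subst hii
    have ht : τ = 1 := by
      ext1 c
      induction c using Fin.lastCases with
      | last => simpa using hl
      | cast r =>
        by_cases h : r = i'
        · subst h; simpa using hi
        · simpa using hr r h
    refine ⟨ht, rfl, ?_⟩
    subst ht
    have h5 := fun a => h1 a i'.castSucc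
    simp only [Equiv.Perm.one_apply, ex_castSucc, if_true, Finsupp.add_apply,
      Finsupp.single_apply, Prod.mk.injEq, and_true] at h5
    have a1 := h5 j
    have a2 := h5 k
    have a3 := h5 j'
    have a4 := h5 k'
    grind
  · rintro ⟨rfl, rfl, ⟨rfl, rfl⟩ | ⟨rfl, rfl⟩⟩
    · rfl
    · refine Finset.sum_congr rfl fun c _ => ?_
      simp only [Equiv.Perm.one_apply]
      induction c using Fin.lastCases with
      | last => simp [ex_last]
      | cast r => simp [ex_castSucc, add_comm]

lemma coeff_Xpoly {n : ℕ} (i j k i' j' k' : Fin n) :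
    MvPolynomial.coeff (∑ c, ex i j k c c) (Xpoly n i' j' k') =
      if i' = i ∧ ((j' = j ∧ k' = k) ∨ (j' = k ∧ k' = j)) then 1 else 0 := by
  have hp : ∀ τ : Equiv.Perm (Fin (n+1)), ∏ c, Xmat n i' j' k' (τ c) c =
      MvPolynomial.monomial (∑ c, ex i' j' k' (τ c) c) 1 := by
    intro τ
    simp only [Xmat_eq, MvPolynomial.monomial_sum_one]
  rw [Xpoly, Matrix.det_apply, MvPolynomial.coeff_sum, Finset.sum_eq_single 1]
  · rw [hp, Equiv.Perm.sign_one, one_smul, MvPolynomial.coeff_monomial]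
    simp only [ex_key, true_and]
  · intro τ _ hτ
    rw [hp, Units.smul_def, MvPolynomial.coeff_smul, MvPolynomial.coeff_monomial, if_neg, smul_zero]
    rw [ex_key]
    tauto
  · simp

lemma Xpoly_indep {n : ℕ} (B : Fin n → Fin n → Fin n → ℝ) (hB : ∀ i j k, B i j k = B i k j)
    (h : ∑ i, ∑ j, ∑ k, B i j k • Xpoly n i j k = 0) (i j k : Fin n) : B i j k = 0 := by
  have h1 := congrArg (MvPolynomial.coeff (∑ c, ex i j k c c)) h
  simp only [MvPolynomial.coeff_sum, MvPolynomial.coeff_smul, coeff_Xpoly,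
    MvPolynomial.coeff_zero, smul_eq_mul] at h1
  have h2 : ∀ i' j' k', B i' j' k' *
      (if i' = i ∧ ((j' = j ∧ k' = k) ∨ (j' = k ∧ k' = j)) then (1:ℝ) else 0) =
      B i j k * (if i' = i ∧ ((j' = j ∧ k' = k) ∨ (j' = k ∧ k' = j)) then 1 else 0) := by
    intro i' j' k'
    split_ifs with hc
    · obtain ⟨rfl, ⟨rfl, rfl⟩ | ⟨rfl, rfl⟩⟩ := hc
      · rfl
      · rw [hB]
    · simp
  simp only [h2, ← Finset.mul_sum] at h1
  refine (mul_eq_zero.mp h1).resolve_right (ne_of_gt ?_)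
  have hnn : ∀ i' j' k' : Fin n,
      (0:ℝ) ≤ if i' = i ∧ ((j' = j ∧ k' = k) ∨ (j' = k ∧ k' = j)) then 1 else 0 := by
    intro i' j' k'; split_ifs <;> norm_num
  refine Finset.sum_pos' (fun a _ => Finset.sum_nonneg fun b _ => Finset.sum_nonneg fun c _ =>
    hnn a b c) ⟨i, Finset.mem_univ _, ?_⟩
  refine Finset.sum_pos' (fun b _ => Finset.sum_nonneg fun c _ => hnn i b c)
    ⟨j, Finset.mem_univ _, ?_⟩
  refine Finset.sum_pos' (fun c _ => hnn i j c) ⟨k, Finset.mem_univ _, ?_⟩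
  simp

/-- If for some transposition `σ` of the subscripts the substitution `x_i^j ↦ x_{σ(i)}^j`
sends each `y_ℓ` to `−y_{σ(ℓ)}`, then `A_{i,jk}^ℓ = A_{σ(i),σ(j)σ(k)}^{σ(ℓ)}`. -/
theorem coeff_transposition_covariance (n : ℕ) (hn : 1 ≤ n)
    (A : Fin n → Fin n → Fin n → Fin n → ℝ)
    (hA : ∀ ℓ i j k, A ℓ i j k = A ℓ i k j)
    (σ : Equiv.Perm (Fin n)) (hσ : σ.IsSwap)
    (hy : ∀ ℓ : Fin n,
      MvPolynomial.rename (σ.prodCongr (Equiv.refl (Fin (n+1)))) (ypoly n A ℓ) =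
        - ypoly n A (σ ℓ)) :
    ∀ ℓ i j k, A ℓ i j k = A (σ ℓ) (σ i) (σ j) (σ k) := by
  intro ℓ i j k
  have h := hy ℓ
  simp only [ypoly, map_sum, map_smul, rename_Xpoly n σ hσ, smul_neg, Finset.sum_neg_distrib,
    neg_inj] at h
  have h2 : ∑ i, ∑ j, ∑ k, A (σ ℓ) i j k • Xpoly n i j k =
      ∑ i, ∑ j, ∑ k, A (σ ℓ) (σ i) (σ j) (σ k) • Xpoly n (σ i) (σ j) (σ k) := by
    rw [← Equiv.sum_comp σ]
    refine Finset.sum_congr rfl fun i _ => ?_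
    rw [← Equiv.sum_comp σ]
    refine Finset.sum_congr rfl fun j _ => ?_
    rw [← Equiv.sum_comp σ]
  have h3 : ∑ i, ∑ j, ∑ k, A ℓ (σ.symm i) (σ.symm j) (σ.symm k) • Xpoly n i j k =
      ∑ i, ∑ j, ∑ k, A ℓ i j k • Xpoly n (σ i) (σ j) (σ k) := by
    rw [← Equiv.sum_comp σ]
    refine Finset.sum_congr rfl fun i _ => ?_
    rw [← Equiv.sum_comp σ]
    refine Finset.sum_congr rfl fun j _ => ?_
    rw [← Equiv.sum_comp σ]
    simp
  have h4 := Xpoly_indep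
    (fun i j k => A ℓ (σ.symm i) (σ.symm j) (σ.symm k) - A (σ ℓ) i j k)
    (fun i j k => by simp only [hA ℓ _ (σ.symm j), hA (σ ℓ) _ j])
    (by simp only [sub_smul, Finset.sum_sub_distrib]; rw [h3, h, sub_self])
    (σ i) (σ j) (σ k)
  simpa [sub_eq_zero] using h4
end

section
/- For every ℓ ∈ {1, …, n}, the polynomial identity (Σ_{m=0}^{n} x_ℓ^m)·V = Σ_{i=1}^{n} X_{i,iℓ} holds. Equivalently, for any points W_0, …, W_n ∈ ℝⁿ, the ℓ-th coordinate of the centroid (W_0 + ⋯ + W_n)/(n+1) times V(W_0, …, W_n) equals (1/(n+1))·Σ_{i=1}^{n} X_{i,iℓ}(W_0, …, W_n). -/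
theorem sum_mul_det_aux {R : Type*} [CommRing R] {m : ℕ} (A : Matrix (Fin m) (Fin m) R)
    (d : Fin m → R) :
    (∑ c, d c) * A.det = ∑ r, (A.updateRow r (fun c => A r c * d c)).det := by
  simp only [Matrix.det_apply']
  rw [Finset.sum_comm, Finset.mul_sum]
  refine Finset.sum_congr rfl fun σ _ => ?_
  have key : ∀ r, ∏ i, (A.updateRow r (fun c => A r c * d c)) (σ i) i
      = (∏ i, A (σ i) i) * d (σ.symm r) := by
    intro r
    have h1 : ∀ i, (A.updateRow r (fun c => A r c * d c)) (σ i) i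
        = A (σ i) i * (if i = σ.symm r then d i else 1) := by
      intro i
      rw [Matrix.updateRow_apply]
      by_cases h : σ i = r
      · have h' : i = σ.symm r := by rw [← h]; simp
        rw [if_pos h, if_pos h', h]
      · have h' : ¬ i = σ.symm r := by
          intro e; apply h; rw [e]; simp
        rw [if_neg h, if_neg h', mul_one]
    simp only [h1, Finset.prod_mul_distrib]
    simp
  simp only [key]
  rw [← Finset.mul_sum, ← Finset.mul_sum, Equiv.sum_comp σ.symm d]
  ring

theorem centroid_poly_first (n : ℕ) (ℓ : Fin n) :
    (∑ m : Fin (n+1), MvPolynomial.X (ℓ, m)) * Vpoly n = ∑ i : Fin n, Xpoly n i i ℓ := by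
  unfold Vpoly
  rw [sum_mul_det_aux, Fin.sum_univ_castSucc]
  have hlast : ((Vmat n).updateRow (Fin.last n)
      (fun c => Vmat n (Fin.last n) c * MvPolynomial.X (ℓ, c))).det = 0 := by
    have hne : ℓ.castSucc ≠ Fin.last n := (Fin.castSucc_lt_last ℓ).ne
    refine Matrix.det_zero_of_row_eq hne ?_
    funext c
    rw [Matrix.updateRow_ne hne, Matrix.updateRow_self]
    simp [Vmat]
  rw [hlast, add_zero]
  refine Finset.sum_congr rfl fun i _ => ?_
  unfold Xpoly
  congr 1
  ext1 r c
  rw [Matrix.updateRow_apply]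
  by_cases h : r = i.castSucc
  · subst h
    simp [Vmat, Xmat]
  · have h' : ¬ (r : ℕ) = (i : ℕ) := fun e => h (Fin.ext e)
    simp [Vmat, Xmat, h, h']

/-- The identity `(Σ_m x_ℓ^m) · V = Σ_i X_{i,iℓ}`; equivalently, the `ℓ`-th coordinate of the
centroid of `W_0, …, W_n` times `V(W_0, …, W_n)` equals `(1/(n+1)) Σ_i X_{i,iℓ}(W_0, …, W_n)`. -/
theorem centroid_poly_identity (n : ℕ) (hn : 1 ≤ n) (ℓ : Fin n) :
    ((∑ m : Fin (n+1), MvPolynomial.X (ℓ, m)) * Vpoly n = ∑ i : Fin n, Xpoly n i i ℓ)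
    ∧ ∀ W : Fin (n+1) → EuclideanSpace ℝ (Fin n),
        ((((n : ℝ) + 1)⁻¹ • ∑ m : Fin (n+1), W m) ℓ) *
            MvPolynomial.eval (fun v => W v.2 v.1) (Vpoly n) =
          (1 / ((n : ℝ) + 1)) *
            ∑ i : Fin n, MvPolynomial.eval (fun v => W v.2 v.1) (Xpoly n i i ℓ) := by
  have h := centroid_poly_first n ℓ
  refine ⟨h, fun W => ?_⟩
  have h2 := congrArg (MvPolynomial.eval (fun v : Fin n × Fin (n+1) => W v.2 v.1)) h
  simp only [map_mul, map_sum, MvPolynomial.eval_X] at h2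
  rw [← h2]
  simp [mul_assoc]
end

section
/- Let W_0, …, W_n ∈ ℝⁿ be affinely independent and let CC denote the circumcenter of the simplex with these vertices (the unique point equidistant from all of them). Then for every ℓ ∈ {1, …, n}, the ℓ-th coordinate of CC times V(W_0, …, W_n) equals (1/2)·Σ_{i=1}^{n} X_{ℓ,ii}(W_0, …, W_n). In particular, the map sending a nondegenerate simplex to (signed volume)·(circumcenter) is given by polynomials in the coordinates of the vertices. -/
/-- For an affinely independent tuple `W_0, …, W_n` with circumcenter `cc` (the unique point
equidistant from all the `W_m`), the `ℓ`-th coordinate of `cc` times `V(W_0, …, W_n)` equals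
`(1/2) Σ_i X_{ℓ,ii}(W_0, …, W_n)`; in particular `V · cc` is polynomial in the vertices. -/
theorem circumcenter_poly_identity (n : ℕ) (hn : 1 ≤ n)
    (W : Fin (n+1) → EuclideanSpace ℝ (Fin n)) (hW : AffineIndependent ℝ W)
    (cc : EuclideanSpace ℝ (Fin n)) (hcc : ∀ m : Fin (n+1), dist cc (W m) = dist cc (W 0))
    (ℓ : Fin n) :
    cc ℓ * MvPolynomial.eval (fun v => W v.2 v.1) (Vpoly n) =
      (1 / 2) * ∑ i : Fin n, MvPolynomial.eval (fun v => W v.2 v.1) (Xpoly n ℓ i i) := by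
  obtain ⟨A, hA⟩ : ∃ A : Matrix (Fin (n+1)) (Fin (n+1)) ℝ,
    A = Matrix.of fun (r c : Fin (n+1)) => if h : (r : ℕ) < n then W c ⟨r, h⟩ else 1 := ⟨_, rfl⟩
  have hV : MvPolynomial.eval (fun v => W v.2 v.1) (Vpoly n) = A.det := by
    rw [Vpoly, RingHom.map_det]
    congr 1
    ext r c
    simp only [Vmat, hA, RingHom.mapMatrix_apply, Matrix.map_apply, Matrix.of_apply]
    split_ifs <;> simp
  have hX : ∀ i, MvPolynomial.eval (fun v => W v.2 v.1) (Xpoly n ℓ i i)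
      = Matrix.cramer A.transpose (fun c => W c i * W c i) ℓ.castSucc := by
    intro i
    rw [Matrix.cramer_transpose_apply, Xpoly, RingHom.map_det]
    congr 1
    ext r c
    simp only [Xmat, hA, RingHom.mapMatrix_apply, Matrix.map_apply, Matrix.of_apply,
      Matrix.updateRow_apply, Fin.ext_iff, Fin.val_castSucc]
    split_ifs <;> simp
  let q : Fin (n+1) → ℝ := Fin.lastCases (dist cc (W 0) ^ 2 - ∑ i, cc i ^ 2) (fun i => 2 * cc i)
  have hq : (∑ i : Fin n, fun c => W c i * W c i) = ∑ k, q k • A k := by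
    ext c
    have h := hcc c
    have h2 : dist cc (W 0) ^ 2 = ∑ i, (cc i - W c i) ^ 2 := by
      rw [← h, EuclideanSpace.dist_eq, Real.sq_sqrt (by positivity)]
      simp [Real.dist_eq, sq_abs]
    rw [Finset.sum_apply, Finset.sum_apply, Fin.sum_univ_castSucc]
    simp only [q, Fin.lastCases_castSucc, Fin.lastCases_last, Pi.smul_apply, smul_eq_mul, hA,
      Matrix.of_apply, Fin.val_castSucc, Fin.is_lt, dite_true, Fin.val_last, lt_irrefl, dite_false,
      h2, mul_one]
    rw [← Finset.sum_sub_distrib, ← Finset.sum_add_distrib]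
    refine Finset.sum_congr rfl fun i _ => ?_
    simp only [Fin.eta]
    ring
  rw [hV, Finset.sum_congr rfl fun i _ => hX i, ← Finset.sum_apply, Matrix.sum_cramer, hq,
    Matrix.cramer_transpose_apply, Matrix.det_updateRow_sum]
  simp only [q, Fin.lastCases_castSucc, smul_eq_mul]
  ring
end

section
/- Let real numbers A_{i,jk}^ℓ (1 ≤ i, j, k, ℓ ≤ n) satisfy A_{i,jk}^ℓ = A_{i,kj}^ℓ together with: (i) A_{i,jk}^ℓ = A_{σ(i),σ(j)σ(k)}^{σ(ℓ)} for every transposition σ of {1, …, n}; (ii) Σ_{i=1}^{n} A_{i,ir}^ℓ = (1/2)·δ_{ℓr} for all ℓ, r; (iii) A_{a,qc}^ℓ·δ_{pb} + A_{a,qb}^ℓ·δ_{pc} − A_{p,bc}^ℓ·δ_{qa} − A_{a,pc}^ℓ·δ_{qb} − A_{a,pb}^ℓ·δ_{qc} + A_{q,bc}^ℓ·δ_{pa} − A_{a,bc}^p·δ_{ℓq} + A_{a,bc}^q·δ_{ℓp} = 0 for all a, b, c, p, q, ℓ. Then there exists t ∈ ℝ such that for all i, j, k, ℓ: A_{i,jk}^ℓ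 = t·(δ_{ij}·δ_{ℓk} + δ_{ik}·δ_{ℓj})/(2(n+1)) + (1 − t)·δ_{iℓ}·δ_{jk}/2. -/
set_option maxHeartbeats 1000000 in
/-- Any solution of the linear system expressing symmetry, transposition, translation and
rotation covariance is an affine combination of the coefficient tensors of the center of mass
and of the circumcenter of mass. -/
theorem coeff_tensor_classification (n : ℕ) (hn : 1 ≤ n)
    (A : Fin n → Fin n → Fin n → Fin n → ℝ)
    (hA : ∀ ℓ i j k, A ℓ i j k = A ℓ i k j)
    (h1 : ∀ σ : Equiv.Perm (Fin n), σ.IsSwap →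
      ∀ ℓ i j k, A ℓ i j k = A (σ ℓ) (σ i) (σ j) (σ k))
    (h2 : ∀ ℓ r : Fin n, ∑ i : Fin n, A ℓ i i r = (1 / 2) * kron ℓ r)
    (h3 : ∀ a b c p q ℓ : Fin n,
      A ℓ a q c * kron p b + A ℓ a q b * kron p c - A ℓ p b c * kron q a
        - A ℓ a p c * kron q b - A ℓ a p b * kron q c + A ℓ q b c * kron p a
        - A p a b c * kron ℓ q + A q a b c * kron ℓ p = 0) :
    ∃ t : ℝ, ∀ ℓ i j k : Fin n,
      A ℓ i j k = t * (kron i j * kron ℓ k + kron i k * kron ℓ j) / (2 * ((n : ℝ) + 1))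
        + (1 - t) * (kron i ℓ * kron j k) / 2 := by
  have hs : ∀ x y ℓ i j k, A ℓ i j k = A (Equiv.swap x y ℓ) (Equiv.swap x y i)
      (Equiv.swap x y j) (Equiv.swap x y k) := by
    intro x y ℓ i j k
    by_cases hxy : x = y
    · subst hxy; simp
    · exact h1 _ ⟨x, y, hxy, rfl⟩ ℓ i j k
  have ht : ∀ p q p' q' : Fin n, p ≠ q → p' ≠ q' → ∃ σ : Equiv.Perm (Fin n),
      σ p = p' ∧ σ q = q' ∧ ∀ ℓ i j k, A ℓ i j k = A (σ ℓ) (σ i) (σ j) (σ k) := by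
    intro p q p' q' h h'
    refine ⟨Equiv.swap (Equiv.swap p p' q) q' * Equiv.swap p p', ?_, ?_, ?_⟩
    · have : p' ≠ Equiv.swap p p' q := by
        intro e
        apply h
        apply (Equiv.swap p p').injective
        rw [← e, Equiv.swap_apply_left]
      simp [Equiv.swap_apply_of_ne_of_ne this h']
    · simp
    · intro ℓ i j k
      rw [hs p p' ℓ i j k, hs (Equiv.swap p p' q) q']
      rfl
  have hx : ∀ p q : Fin n, p ≠ q → A q p p p = 0 ∧ A p q p p = 0 ∧ A p p q p = 0 ∧
      A p p p q = 0 ∧ A p p p p = A p p q q + A p q p q + A p q q p := by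
    intro p q h
    have h' := h.symm
    have e1 := hs p q q p p p
    have e2 := hs p q p q p p
    have e3 := hs p q p p q p
    have e4 := hs p q p p p q
    have f1 := hs p q p p q q
    have f2 := hs p q p q p q
    have f3 := hs p q p q q p
    simp only [Equiv.swap_apply_left, Equiv.swap_apply_right] at e1 e2 e3 e4 f1 f2 f3
    have g1 := h3 p p p p q p
    have g2 := h3 p q q p q p
    have g3 := h3 q p q p q p
    have g4 := h3 q q p p q p
    have g5 := h3 p p q p q p
    simp [kron, h, h'] at g1 g2 g3 g4 g5
    refine ⟨?_, ?_, ?_, ?_, ?_⟩ <;> linarith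
  have hy : ∀ p q r : Fin n, p ≠ q → p ≠ r → q ≠ r →
      A p p q r = 0 ∧ A p q p r = 0 ∧ A p q r p = 0 ∧
      A q p p r = 0 ∧ A q p r p = 0 ∧ A q r p p = 0 := by
    intro p q r hpq hpr hqr
    have h1' := hpq.symm
    have h2' := hpr.symm
    have h3' := hqr.symm
    obtain ⟨a1, a2, a3, a4, -⟩ := hx p r hpr
    obtain ⟨b1, b2, b3, b4, -⟩ := hx p q hpq
    have s1 := hs p q p p q r
    have s2 := hs p q p q p r
    have s3 := hs p q p q r p
    have s4 := hs p q q p p r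
    have s5 := hs p q q p r p
    have s6 := hs p q q r p p
    have t1 := hs q r p p q r
    have t2 := hs q r p q p r
    have t3 := hs q r p q r p
    have t4 := hs q r q p p r
    have t5 := hs q r q p r p
    have t6 := hs q r q r p p
    simp only [Equiv.swap_apply_left, Equiv.swap_apply_right,
      Equiv.swap_apply_of_ne_of_ne h2' h3', Equiv.swap_apply_of_ne_of_ne hpq hpr]
      at s1 s2 s3 s4 s5 s6 t1 t2 t3 t4 t5 t6
    have u1 := hA p q r p
    have u2 := hA q p r p
    have g1 := h3 p q r p q p
    have g2 := h3 q p r p q p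
    have g3 := h3 p r q p q p
    have g4 := h3 q r p p q p
    have g5 := h3 r p q p q p
    have g6 := h3 r q p p q p
    have g7 := h3 p p r p q q
    have g8 := h3 p r p p q q
    have g9 := h3 r p p p q q
    have g10 := h3 p p q p q r
    have g11 := h3 p q p p q r
    have g12 := h3 q p p p q r
    simp [kron, hpq, hpr, hqr, h1', h2', h3'] at g1 g2 g3 g4 g5 g6 g7 g8 g9 g10 g11 g12
    refine ⟨?_, ?_, ?_, ?_, ?_, ?_⟩ <;> linarith
  have hz : ∀ p q r s : Fin n, p ≠ q → p ≠ r → p ≠ s → q ≠ r → q ≠ s → r ≠ s →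
      A p q r s = 0 := by
    intro p q r s h12 h13 h14 h23 h24 h34
    have e := hs p q p q r s
    simp only [Equiv.swap_apply_left, Equiv.swap_apply_right,
      Equiv.swap_apply_of_ne_of_ne h13.symm h23.symm,
      Equiv.swap_apply_of_ne_of_ne h14.symm h24.symm] at e
    have g := h3 p r s p q p
    simp [kron, h12, h13, h14, h23, h24, h12.symm] at g
    linarith
  obtain ⟨α, β, hab⟩ : ∃ α β : ℝ, ∀ ℓ i j k, A ℓ i j k =
      α * (kron i ℓ * kron j k) + β * (kron i j * kron ℓ k + kron i k * kron ℓ j) := by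
    by_cases hn1 : n = 1
    · subst hn1
      refine ⟨A 0 0 0 0, 0, ?_⟩
      intro ℓ i j k
      rw [Subsingleton.elim ℓ 0, Subsingleton.elim i 0, Subsingleton.elim j 0,
        Subsingleton.elim k 0]
      simp [kron]
    · obtain ⟨u, v, huv⟩ : ∃ u v : Fin n, u ≠ v :=
        ⟨⟨0, by omega⟩, ⟨1, by omega⟩, by simp⟩
      refine ⟨A u u v v, A u v v u, ?_⟩
      have k1 : ∀ p q, p ≠ q → A p p q q = A u u v v := by
        intro p q h
        obtain ⟨σ, rfl, rfl, hσ⟩ := ht u v p q huv h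
        exact (hσ _ _ _ _).symm
      have k2 : ∀ p q, p ≠ q → A p q q p = A u v v u := by
        intro p q h
        obtain ⟨σ, rfl, rfl, hσ⟩ := ht u v p q huv h
        exact (hσ _ _ _ _).symm
      have k3 : ∀ p q, p ≠ q → A p q p q = A u v v u := by
        intro p q h
        rw [hA, k2 p q h]
      have k0 : ∀ p, A p p p p = A u u v v + 2 * A u v v u := by
        intro p
        obtain ⟨q, hq⟩ : ∃ q, p ≠ q := by
          by_cases h : p = u
          · exact ⟨v, h ▸ huv⟩
          · exact ⟨u, h⟩
        rw [(hx p q hq).2.2.2.2, k1 p q hq, k2 p q hq, k3 p q hq]; ring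
      intro ℓ i j k
      clear h1 h2 h3 hs ht
      by_cases c1 : ℓ = i
      · subst c1
        by_cases c2 : ℓ = j
        · subst c2
          by_cases c3 : ℓ = k
          · subst c3
            rw [k0]; simp [kron]; ring
          · rw [(hx ℓ k c3).2.2.2.1]; simp [kron, c3]
        · by_cases c3 : ℓ = k
          · subst c3
            rw [(hx ℓ j c2).2.2.1]; simp [kron, c2, Ne.symm c2]
          · by_cases c4 : j = k
            · subst c4
              rw [k1 ℓ j c2]; simp [kron, c2]
            · rw [(hy ℓ j k c2 c3 c4).1]; simp [kron, c2, c3, c4]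
      · have c1' := Ne.symm c1
        by_cases c2 : ℓ = j
        · subst c2
          by_cases c3 : ℓ = k
          · subst c3
            rw [(hx ℓ i c1).2.1]; simp [kron, c1']
          · by_cases c4 : i = k
            · subst c4
              rw [k3 ℓ i c1]; simp [kron, c1, c1']
            · rw [(hy ℓ i k c1 c3 c4).2.1]; simp [kron, c1', c3, c4]
        · have c2' := Ne.symm c2
          by_cases c3 : ℓ = k
          · subst c3
            by_cases c4 : i = j
            · subst c4
              rw [k2 ℓ i c1]; simp [kron, c1']
            · rw [(hy ℓ i j c1 c2 c4).2.2.1]; simp [kron, c1', c4, c2']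
          · by_cases c4 : i = j
            · subst c4
              by_cases c5 : i = k
              · subst c5
                rw [(hx i ℓ c1').1]; simp [kron, c1, c1']
              · rw [(hy i ℓ k c1' c5 c3).2.2.2.1]; simp [kron, c1, c1', c3]
            · by_cases c5 : i = k
              · subst c5
                rw [(hy i ℓ j c1' c4 c2).2.2.2.2.1]; simp [kron, c1, c1', c2, c4]
              · by_cases c6 : j = k
                · subst c6
                  rw [(hy j ℓ i c2' (Ne.symm c4) c1).2.2.2.2.2]; simp [kron, c1', c4]
                · rw [hz ℓ i j k c1 c2 c3 c4 c5 c6]; simp [kron, c1', c4, c5]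
  have hpos : (2 * ((n : ℝ) + 1)) ≠ 0 := by positivity
  have hsum : α + β * (n + 1) = 1 / 2 := by
    have h := h2 ⟨0, hn⟩ ⟨0, hn⟩
    simp only [hab] at h
    simp [kron, Finset.sum_add_distrib, ← Finset.mul_sum, mul_add] at h
    linarith
  refine ⟨2 * (n + 1) * β, ?_⟩
  intro ℓ i j k
  rw [hab, mul_assoc, mul_assoc, mul_comm (2 : ℝ), ← mul_assoc]
  have : α = (1 - 2 * (n + 1) * β) / 2 := by linarith
  rw [this]
  field_simp
  ring
end

section
/- Let Δ = (V_0, …, V_n) be an affinely independent tuple of points of ℝⁿ and let O ∈ ℝⁿ be a point such that for each m ∈ {0, …, n}, the tuple Δ_m = (V_0, …, V_{m−1}, O, V_{m+1}, …, V_n) is also affinely independent. Then Vol(Δ)·CC(Δ) = Σ_{m=0}^{n} Vol(Δ_m)·CC(Δ_m), where Vol denotes the signed volume (1/n!)·det of the matrix of edge vectors from the first vertex, and CC denotes the circumcenter (the unique point equidistant from all n+1 vertices). -/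
theorem signedVol_aux (n : ℕ) (W : Fin (n+1) → EuclideanSpace ℝ (Fin n)) :
    signedVol n W = (Matrix.of fun i j : Fin (n+1) =>
      (Fin.cons 1 (fun k => W i k) : Fin (n+1) → ℝ) j).det / n.factorial := by
  unfold signedVol
  congr 1
  rw [Matrix.det_eq_of_forall_row_eq_smul_add_const
    (B := Matrix.of fun i j : Fin (n+1) => (Fin.cons (if i = 0 then 1 else 0)
      (fun k => if i = 0 then W 0 k else W i k - W 0 k) : Fin (n+1) → ℝ) j)
    (fun i => if i = 0 then 0 else 1) 0 (by simp)]
  · rw [Matrix.det_succ_column_zero, Fin.sum_univ_succ]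
    simp [Fin.succ_ne_zero]
    rw [← Matrix.det_transpose]
    congr 1
  · intro i j
    refine Fin.cases ?_ (fun k => ?_) j
    · by_cases h : i = 0 <;> simp [h]
    · by_cases h : i = 0 <;> simp [h]

theorem signedVol_update (n : ℕ) (W : Fin (n+1) → EuclideanSpace ℝ (Fin n))
    (l : Fin (n+1) → ℝ) (hl : ∑ i, l i = 1) (m : Fin (n+1)) :
    signedVol n (Function.update W m (∑ i, l i • W i)) = l m * signedVol n W := by
  rw [signedVol_aux, signedVol_aux, ← mul_div_assoc]
  congr 1
  set A : Matrix (Fin (n+1)) (Fin (n+1)) ℝ := Matrix.of fun i j : Fin (n+1) =>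
      (Fin.cons 1 (fun k => W i k) : Fin (n+1) → ℝ) j with hA
  have := Matrix.det_updateRow_sum A m l
  rw [smul_eq_mul] at this
  rw [← this]
  congr 1
  ext i j
  by_cases h : i = m
  · subst h
    refine Fin.cases ?_ (fun k => ?_) j
    · simp [hA, hl]
    · simp [hA]
  · simp [hA, h, Matrix.updateRow_ne]

/-- Archimedes Lemma for the map `Δ ↦ Vol(Δ) · CC(Δ)`: subdividing the simplex `Δ` by a point
`O` into the simplices `Δ_m` (obtained by replacing the `m`-th vertex by `O`), one has
`Vol(Δ) · CC(Δ) = Σ_m Vol(Δ_m) · CC(Δ_m)`. -/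
theorem vol_smul_circumcenter_additive (n : ℕ) (hn : 1 ≤ n)
    (Δ : Fin (n+1) → EuclideanSpace ℝ (Fin n)) (hΔ : AffineIndependent ℝ Δ)
    (O : EuclideanSpace ℝ (Fin n))
    (hm : ∀ m : Fin (n+1), AffineIndependent ℝ (Function.update Δ m O))
    (cc : EuclideanSpace ℝ (Fin n)) (hcc : ∀ a : Fin (n+1), dist cc (Δ a) = dist cc (Δ 0))
    (ccs : Fin (n+1) → EuclideanSpace ℝ (Fin n))
    (hccs : ∀ m a : Fin (n+1),
      dist (ccs m) (Function.update Δ m O a) = dist (ccs m) (Function.update Δ m O 0)) :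
    signedVol n Δ • cc = ∑ m : Fin (n+1), signedVol n (Function.update Δ m O) • ccs m := by

  classical
  have htop : affineSpan ℝ (Set.range Δ) = ⊤ := by
    rw [hΔ.affineSpan_eq_top_iff_card_eq_finrank_add_one]
    simp
  let b : AffineBasis (Fin (n+1)) ℝ (EuclideanSpace ℝ (Fin n)) := ⟨Δ, hΔ, htop⟩
  have hlc : ∀ p, ∑ i, b.coord i p • Δ i = p := fun p => b.linear_combination_coord_eq_self p
  have hsum : ∀ p, ∑ i, b.coord i p = 1 := fun p => b.sum_coord_apply_eq_one p
  obtain ⟨l, hl⟩ : ∃ l : Fin (n+1) → ℝ, l = fun i => b.coord i O := ⟨_, rfl⟩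
  have hl1 : ∑ i, l i = 1 := by rw [hl]; exact hsum O
  have hlO : ∑ i, l i • Δ i = O := by rw [hl]; exact hlc O
  have hvol : ∀ m, signedVol n (Function.update Δ m O) = l m * signedVol n Δ := by
    intro m
    have := signedVol_update n Δ l hl1 m
    rwa [hlO] at this
  have huniq : ∀ y : EuclideanSpace ℝ (Fin n), ∀ k : ℝ, (∀ a, inner ℝ y (Δ a) = k) → y = 0 := by
    intro y k hk
    have h : ∀ p, inner ℝ y p = k := by
      intro p
      rw [← hlc p, inner_sum]
      simp only [inner_smul_right, hk]
      rw [← Finset.sum_mul, hsum, one_mul]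
    have h0 := h 0
    rw [inner_zero_right] at h0
    exact inner_self_eq_zero.mp ((h y).trans h0.symm)
  have hu0 : ∑ i, l i • (Δ i - O) = 0 := by
    simp only [smul_sub, Finset.sum_sub_distrib, hlO, ← Finset.sum_smul, hl1, one_smul, sub_self]
  have h1 : ∀ m a, a ≠ m → 2 * inner ℝ (ccs m - O) (Δ a - O) = ‖Δ a - O‖^2 := by
    intro m a ha
    have e : dist (ccs m) (Δ a) = dist (ccs m) O := by
      have e1 := hccs m a
      have e2 := hccs m m
      rw [Function.update_of_ne ha] at e1
      rw [Function.update_self] at e2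
      rw [e1, e2]
    rw [dist_eq_norm, dist_eq_norm] at e
    have e3 : ccs m - Δ a = (ccs m - O) - (Δ a - O) := by abel
    have e4 := norm_sub_sq_real (ccs m - O) (Δ a - O)
    rw [← e3, e] at e4
    linarith
  obtain ⟨S, hS⟩ : ∃ S : ℝ, S = ∑ i, l i * ‖Δ i - O‖^2 := ⟨_, rfl⟩
  have h2 : ∀ m, l m * (2 * inner ℝ (ccs m - O) (Δ m - O)) = l m * ‖Δ m - O‖^2 - S := by
    intro m
    have e : ∑ i, l i * (2 * inner ℝ (ccs m - O) (Δ i - O)) = 0 := by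
      have := congrArg (fun z => 2 * inner ℝ (ccs m - O) z) hu0
      simp only [inner_sum, inner_smul_right, inner_zero_right, mul_zero, Finset.mul_sum] at this
      rw [← this]
      exact Finset.sum_congr rfl fun i _ => by ring
    rw [← Finset.add_sum_erase _ _ (Finset.mem_univ m)] at e
    rw [hS, ← Finset.add_sum_erase _ _ (Finset.mem_univ m)]
    rw [Finset.sum_congr rfl fun i hi => by rw [h1 m i (Finset.ne_of_mem_erase hi)]] at e
    linarith
  have hx : ∀ a, 2 * inner ℝ (∑ m, l m • (ccs m - O)) (Δ a - O) = ‖Δ a - O‖^2 - S := by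
    intro a
    rw [sum_inner, Finset.mul_sum]
    have e : ∀ m, 2 * inner ℝ (l m • (ccs m - O)) (Δ a - O)
        = l m * ‖Δ a - O‖^2 - if m = a then S else 0 := by
      intro m
      rw [real_inner_smul_left]
      split_ifs with h
      · subst h
        rw [← h2]; ring
      · rw [← h1 m a (Ne.symm h)]; ring
    simp only [e, Finset.sum_sub_distrib, ← Finset.sum_mul, hl1]
    simp
  have hc : ∀ a, 2 * inner ℝ (cc - O) (Δ a - O)
      = ‖Δ a - O‖^2 + ‖cc - O‖^2 - dist cc (Δ 0)^2 := by
    intro a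
    have e3 : cc - Δ a = (cc - O) - (Δ a - O) := by abel
    have e4 := norm_sub_sq_real (cc - O) (Δ a - O)
    rw [← e3, ← dist_eq_norm cc, hcc a] at e4
    linarith
  have key : (cc - O) - ∑ m, l m • (ccs m - O) = 0 := by
    refine huniq _ (inner ℝ ((cc - O) - ∑ m, l m • (ccs m - O)) O
      + (‖cc - O‖^2 - dist cc (Δ 0)^2 + S) / 2) fun a => ?_
    have e : inner ℝ ((cc - O) - ∑ m, l m • (ccs m - O)) (Δ a - O)
        = (‖cc - O‖^2 - dist cc (Δ 0)^2 + S) / 2 := by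
      rw [inner_sub_left]
      linarith [hx a, hc a]
    rw [inner_sub_right] at e
    linarith
  have hcceq : cc = ∑ m, l m • ccs m := by
    simp only [smul_sub, Finset.sum_sub_distrib, ← Finset.sum_smul, hl1, one_smul] at key
    rw [sub_sub_sub_cancel_right] at key
    exact sub_eq_zero.mp key
  simp only [hvol]
  rw [hcceq, Finset.smul_sum]
  refine Finset.sum_congr rfl fun m _ => ?_
  rw [smul_smul, mul_comm]
end

section
/- For α ∈ (0, π/2), let T(α) be the triangle in ℝ² with vertices (−1, 0), (1, 0) and (0, tan α); it is an isosceles triangle with base of length 2 on the x-axis and base angle α, and its area equals tan α. Then the limit, as α → 0 from the right, of Area(T(α))·CC(T(α)) exists and equals (0, −1/2), where CC(T(α)) is the circumcenter of T(α). In particular, Area(T(α))·CC(T(α)) does not tend to the zero vector even though both the area of T(α) and its moment vector ∫_{T(α)} x dx tend to zero. -/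
open Filter

/-- For `α ∈ (0, π/2)`, let `T(α)` be the isosceles triangle with vertices `(−1, 0)`, `(1, 0)`
and `(0, tan α)`, of area `tan α`, and let `cc α` be its circumcenter (the point equidistant
from the three vertices). Then `Area(T(α)) · CC(T(α)) = tan α • cc α` tends to `(0, −1/2)` as
`α → 0⁺`. -/
theorem area_smul_circumcenter_tendsto (cc : ℝ → EuclideanSpace ℝ (Fin 2))
    (hcc : ∀ α ∈ Set.Ioo (0 : ℝ) (Real.pi / 2),
      dist (cc α) (!₂[(-1 : ℝ), 0] : EuclideanSpace ℝ (Fin 2)) =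
          dist (cc α) (!₂[(1 : ℝ), 0] : EuclideanSpace ℝ (Fin 2)) ∧
        dist (cc α) (!₂[(-1 : ℝ), 0] : EuclideanSpace ℝ (Fin 2)) =
          dist (cc α) (!₂[(0 : ℝ), Real.tan α] : EuclideanSpace ℝ (Fin 2)))
    (L : EuclideanSpace ℝ (Fin 2)) (hL0 : L 0 = 0) (hL1 : L 1 = -(1 / 2)) :
    Tendsto (fun α : ℝ => Real.tan α • cc α) (nhdsWithin 0 (Set.Ioi 0)) (nhds L) := by
  have key : ∀ α ∈ Set.Ioo (0 : ℝ) (Real.pi / 2),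
      Real.tan α • cc α = L + (Real.tan α ^ 2 / 2) • (!₂[(0 : ℝ), 1] : EuclideanSpace ℝ (Fin 2)) := by
    intro α hα
    obtain ⟨h1, h2⟩ := hcc α hα
    have h1' := congrArg (fun x : ℝ => x ^ 2) h1
    have h2' := congrArg (fun x : ℝ => x ^ 2) h2
    simp only [EuclideanSpace.dist_sq_eq, Fin.sum_univ_two, Real.dist_eq, sq_abs] at h1' h2'
    simp at h1' h2'
    have hx : cc α 0 = 0 := by linarith
    rw [hx] at h2'
    ext i
    fin_cases i
    · simp [hx, hL0]
    · simp [hL1]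
      linarith
  have ht : Tendsto Real.tan (nhdsWithin 0 (Set.Ioi 0)) (nhds 0) := by
    have h : ContinuousAt Real.tan 0 := Real.continuousAt_tan.2 (by simp)
    have h' := h.tendsto
    rw [Real.tan_zero] at h'
    exact h'.mono_left nhdsWithin_le_nhds
  have hlim : Tendsto (fun α : ℝ => L + (Real.tan α ^ 2 / 2) •
      (!₂[(0 : ℝ), 1] : EuclideanSpace ℝ (Fin 2))) (nhdsWithin 0 (Set.Ioi 0)) (nhds L) := by
    have h := (((ht.pow 2).div_const 2).smul_const
      (!₂[(0 : ℝ), 1] : EuclideanSpace ℝ (Fin 2))).const_add L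
    simpa using h
  refine hlim.congr' ?_
  filter_upwards [Ioo_mem_nhdsGT (show (0 : ℝ) < Real.pi / 2 by positivity)] with α hα
  exact (key α hα).symm
end
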